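/- arXiv:2503.18691 — 3 statements merged into one kernel-verified Lean document; each statement's English description precedes it below -/
import Mathlib

section
/- For any m ∈ ℕ, any b ∈ ℝ^m, and any n ∈ ℕ, the set {x♯b : x ∈ ℝ^n} ⊆ ℝ^{n+m} is gap-rich; in fact, it is gap-rich with exceptional set the finite set S = {E ∈ ℝ : the (1,1) entry of T(0^{♯(n−1)}♯b, E) vanishes}. -/
open Set MeasureTheory BoundedContinuousFunction

noncomputable section

/-- ℓ²(ℤ; ℝ). -/
abbrev Ell2 : Type := lp (fun _ : ℤ => ℝ) 2

/-- Spectrum of the discrete Schrödinger operator `H_W = Δ + W` on `ℓ²(ℤ)`: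
`E` lies in the spectrum iff `H_W - E` is not a linear bijection of `ℓ²(ℤ)`
(for bounded `W`, by the open mapping theorem this is equivalent to `H_W - E`
not being boundedly invertible). -/
def SchrodingerSpectrum (W : ℤ → ℝ) : Set ℝ :=
  {E : ℝ | ¬ ∃ T : Ell2 ≃ₗ[ℝ] Ell2,
      ∀ f : Ell2, ∀ n : ℤ,
        (T f) n = f (n - 1) + f (n + 1) + (W n - E) * f n}

/-- A Cantor set of zero Hausdorff dimension: nonempty, compact, without isolated
points, with empty interior, and of Hausdorff dimension zero. -/
def IsZeroDimCantor (s : Set ℝ) : Prop :=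
  s.Nonempty ∧ IsCompact s ∧ Preperfect s ∧ interior s = ∅ ∧ dimH s = 0

/-- Periodic bounded sequences. -/
def IsPeriodicSeq {α : Type*} [PseudoMetricSpace α] (W : ℤ →ᵇ α) : Prop :=
  ∃ q : ℕ, 0 < q ∧ ∀ n : ℤ, W (n + q) = W n

/-- The limit-periodic functions `ℤ → ℝ`: uniform limits of periodic functions. -/
def LPZ : Set (ℤ →ᵇ ℝ) := closure {W : ℤ →ᵇ ℝ | IsPeriodicSeq W}

/-- A subset of ℝ is discrete if it has no accumulation points. -/
def IsDiscreteSet (S : Set ℝ) : Prop := ∀ x : ℝ, ¬ AccPt x (Filter.principal S)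

/-- Periodic extension `w^{♯ℤ}` of a finite word `w`. -/
def perExt {α : Type*} [Zero α] {m : ℕ} (w : Fin m → α) : ℤ → α :=
  fun n =>
    if h : 0 < m then
      w ⟨(n % (m : ℤ)).toNat, by
        have h1 : 0 ≤ n % (m : ℤ) := Int.emod_nonneg n (by exact_mod_cast h.ne')
        have h2 : n % (m : ℤ) < (m : ℤ) := Int.emod_lt_of_pos n (by exact_mod_cast h)
        omega⟩
    else 0

/-- Aggregation `y^♮` of a sequence of blocks in `ℝ^k` into a potential `ℤ → ℝ`. -/
def agg (k : ℕ) (x : ℤ → (Fin k → ℝ)) : ℤ → ℝ :=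
  fun n =>
    if h : 0 < k then
      x (Int.fdiv n k) ⟨(n % (k : ℤ)).toNat, by
        have h1 : 0 ≤ n % (k : ℤ) := Int.emod_nonneg n (by exact_mod_cast h.ne')
        have h2 : n % (k : ℤ) < (k : ℤ) := Int.emod_lt_of_pos n (by exact_mod_cast h)
        omega⟩
    else 0

/-- `Y ⊆ ℝ^k` is gap-rich with exceptional set `S`: `S` is discrete and near any
word over `Y` there is a word over `Y` whose periodic Schrödinger operator has a
gap at any prescribed energy `E ∉ S`. -/
def GapRich (k : ℕ) (Y : Set (Fin k → ℝ)) (S : Set ℝ) : Prop :=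
  IsDiscreteSet S ∧
  ∀ E : ℝ, E ∉ S → ∀ m : ℕ, 0 < m → ∀ x : Fin m → (Fin k → ℝ), (∀ i, x i ∈ Y) →
    ∀ ε : ℝ, 0 < ε →
      ∃ l : ℕ, 0 < l ∧ ∃ y : Fin l → (Fin k → ℝ),
        (∀ i, y i ∈ Y) ∧
        (∀ j : ℤ, dist (perExt x j) (perExt y j) < ε) ∧
        E ∉ SchrodingerSpectrum (agg k (perExt y))

/-- The periodic elements of `Y^ℤ`. -/
def PerY (k : ℕ) (Y : Set (Fin k → ℝ)) : Set (ℤ →ᵇ (Fin k → ℝ)) :=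
  {x | IsPeriodicSeq x ∧ ∀ n : ℤ, x n ∈ Y}

/-- The limit-periodic elements of `Y^ℤ`: uniform limits of periodic elements. -/
def LPY (k : ℕ) (Y : Set (Fin k → ℝ)) : Set (ℤ →ᵇ (Fin k → ℝ)) := closure (PerY k Y)

/-- The one-step Schrödinger transfer matrix `T(v,E)`. -/
def Tmat (v E : ℝ) : Matrix (Fin 2) (Fin 2) ℝ := !![E - v, -1; 1, 0]

/-- Transfer matrix over a word: `T(x,E) = T(x_q,E) ⋯ T(x₁,E)`. -/
def TmatWord {q : ℕ} (x : Fin q → ℝ) (E : ℝ) : Matrix (Fin 2) (Fin 2) ℝ :=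
  ((List.ofFn fun i => Tmat (x i) E).reverse).prod

/-! Write `S` for the shift and `τ` for the trace of the transfer matrix over one period `q`. For a
`q`-periodic potential, variation of constants gives a bounded operator `L` with
`L (H - E) = S ^ q + S ^ (-q) - τ`. As `‖S ^ q + S ^ (-q)‖ ≤ 2`, the right side is invertible when
`|τ| > 2`, and since `H - E` is self-adjoint, its left inverse makes it invertible.

It remains to find nearby words over `Y` with `|τ| > 2`. Adding `a` to the first letter of a word
multiplies its transfer matrix `G` on the right by the lower unipotent matrix `U a` with entry `a`,
and `tr (G * U a) = tr G + a * G 0 1`. If `G 0 1 ≠ 0` and `|tr G| ≤ 2`, a small shear therefore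
turns `G` into an elliptic matrix `M` with irrational angle `θ`, and
`tr (M ^ N * U d) = 2 cos (N θ) + κ sin (N θ)` with `κ ≠ 0` exceeds `2` for a suitable sign of `d`
as soon as `N θ` is small modulo `2π`; such `N` exist by Dirichlet's theorem.

The condition `G 0 1 ≠ 0` is generic: for one block `x ♯ b` it holds at `x = 0` when `E` is not
exceptional, hence on a dense set by analyticity, and for concatenations of blocks the
shears of the first letter reduce it to single blocks. -/

section OrderedProducts

variable {G : Type*} [Monoid G]

/-- The product `f (q - 1) ⋯ f 1 * f 0` of a finite family, later factors standing on the left as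
in `TmatWord`. -/
def revProd {q : ℕ} (f : Fin q → G) : G := (List.ofFn f).reverse.prod

lemma revProd_succ {q : ℕ} (f : Fin (q + 1) → G) :
    revProd f = revProd (fun i : Fin q => f i.succ) * f 0 := by
  simp [revProd, List.ofFn_succ]

lemma revProd_castSucc {q : ℕ} (f : Fin (q + 1) → G) :
    revProd f = f (Fin.last q) * revProd fun i : Fin q => f i.castSucc := by
  rw [revProd, revProd, List.ofFn_succ']
  simp

lemma revProd_const (q : ℕ) (g : G) : revProd (fun _ : Fin q => g) = g ^ q := by
  simp [revProd, List.ofFn_const]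

/-- The concatenation of `N` words of length `M`. -/
def concatWords {α : Type*} {N M : ℕ} (X : Fin N → Fin M → α) : Fin (N * M) → α :=
  fun i => X i.divNat i.modNat

lemma concatWords_mk {α : Type*} {N M : ℕ} (X : Fin N → Fin M → α) (i : Fin N) (j : Fin M)
    (h : i * M + j < N * M) : concatWords X ⟨i * M + j, h⟩ = X i j := by
  have hij : (⟨i * M + j, h⟩ : Fin (N * M)) = finProdFinEquiv (i, j) :=
    Fin.ext (by simp [mul_comm, add_comm])
  have hsymm := finProdFinEquiv.symm_apply_apply (i, j)
  rw [← hij, finProdFinEquiv_symm_apply, Prod.mk.injEq] at hsymm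
  rw [concatWords, hsymm.1, hsymm.2]

lemma revProd_concatWords {N M : ℕ} (X : Fin N → Fin M → G) :
    revProd (concatWords X) = revProd fun i => revProd (X i) := by
  have hsplit : List.ofFn (concatWords X) = (List.ofFn fun i => List.ofFn (X i)).flatten := by
    simp only [List.ofFn_mul, concatWords_mk]
  rw [revProd, hsplit, List.reverse_flatten]
  simp [revProd, List.prod_flatten, List.map_ofFn, Function.comp_def, List.map_reverse]

end OrderedProducts

section PeriodicExtension

lemma emod_mul_ediv_self (n N : ℤ) {M : ℤ} (hM : 0 < M) : n % (N * M) / M = n / M % N := by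
  rw [Int.emod_def, Int.emod_def, Int.ediv_ediv_of_nonneg hM.le, mul_comm M N, mul_right_comm,
    Int.sub_mul_ediv_right _ _ hM.ne']

lemma toNat_emod_mul_mod (n : ℤ) {N M : ℕ} (hN : 0 < N) (hM : 0 < M) :
    (n % ((N * M : ℕ) : ℤ)).toNat % M = (n % (M : ℤ)).toNat := by
  obtain ⟨r, hr⟩ := Int.eq_ofNat_of_zero_le (Int.emod_nonneg n (by positivity : (N * M : ℤ) ≠ 0))
  rw [Nat.cast_mul, ← Int.emod_emod_of_dvd n (dvd_mul_left (M : ℤ) N), hr, ← Int.natCast_mod,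
    Int.toNat_natCast, Int.toNat_natCast]

lemma toNat_emod_mul_div (n : ℤ) {N M : ℕ} (hN : 0 < N) (hM : 0 < M) :
    (n % ((N * M : ℕ) : ℤ)).toNat / M = (n.fdiv M % (N : ℤ)).toNat := by
  obtain ⟨r, hr⟩ := Int.eq_ofNat_of_zero_le (Int.emod_nonneg n (by positivity : (N * M : ℤ) ≠ 0))
  rw [Int.fdiv_eq_ediv_of_nonneg _ (Int.natCast_nonneg M),
    ← emod_mul_ediv_self n N (Int.natCast_pos.mpr hM), Nat.cast_mul, hr, ← Int.natCast_div,
    Int.toNat_natCast, Int.toNat_natCast]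

variable {α : Type*} [Zero α]

lemma perExt_periodic {m : ℕ} (w : Fin m → α) : Function.Periodic (perExt w) (m : ℤ) := fun n => by
  simp only [perExt, Int.add_emod_right]

lemma perExt_natCast {m : ℕ} (w : Fin m → α) (i : Fin m) : perExt w (i : ℕ) = w i := by
  have hi : ((i : ℕ) : ℤ) % m = (i : ℕ) := by
    rw [← Int.natCast_mod, Nat.mod_eq_of_lt i.isLt]
  simp only [perExt, dif_pos i.pos, hi, Int.toNat_natCast]

lemma agg_perExt {k M : ℕ} (y : Fin M → Fin k → ℝ) :
    agg k (perExt y) = perExt (concatWords y) := by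
  funext n
  rcases Nat.eq_zero_or_pos k with rfl | hk
  · simp [agg, perExt]
  rcases Nat.eq_zero_or_pos M with rfl | hM
  · simp [agg, perExt]
  simp only [agg, perExt, dif_pos hk, dif_pos hM, dif_pos (Nat.mul_pos hM hk), concatWords,
    Fin.divNat, Fin.modNat, toNat_emod_mul_mod _ hM hk, toNat_emod_mul_div _ hM hk]

lemma dist_perExt_concatWords_lt {β : Type*} [Zero β] [PseudoMetricSpace β] {N M : ℕ} (hN : 0 < N)
    (hM : 0 < M) {x : Fin M → β} {X : Fin N → Fin M → β} {ε : ℝ}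
    (h : ∀ i j, dist (x j) (X i j) < ε) (n : ℤ) :
    dist (perExt x n) (perExt (concatWords X) n) < ε := by
  simp only [perExt, dif_pos hM, dif_pos (Nat.mul_pos hN hM), concatWords, Fin.modNat,
    toNat_emod_mul_mod _ hN hM]
  exact h _ _

end PeriodicExtension

section Transfer

lemma det_Tmat (v E : ℝ) : (Tmat v E).det = 1 := by simp [Tmat, Matrix.det_fin_two]

lemma det_revProd {ι R : Type*} [Fintype ι] [DecidableEq ι] [CommRing R] {q : ℕ}
    {f : Fin q → Matrix ι ι R} (hf : ∀ i, (f i).det = 1) : (revProd f).det = 1 := by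
  induction q with
  | zero => simp [revProd]
  | succ q ih => rw [revProd_succ, Matrix.det_mul, ih fun i => hf i.succ, hf 0, one_mul]

lemma det_TmatWord {q : ℕ} (x : Fin q → ℝ) (E : ℝ) : (TmatWord x E).det = 1 :=
  det_revProd fun i => det_Tmat (x i) E

/-- The transfer matrix of the potential `W` at energy `E` over the `q` sites `n, …, n + q - 1`; it
maps `(ψ n, ψ (n - 1))` to `(ψ (n + q), ψ (n + q - 1))` when `H_W ψ = E ψ`. -/
def transfer (W : ℤ → ℝ) (E : ℝ) (n : ℤ) (q : ℕ) : Matrix (Fin 2) (Fin 2) ℝ :=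
  TmatWord (fun i : Fin q => W (n + i)) E

variable (W : ℤ → ℝ) (E : ℝ) (n : ℤ) (q : ℕ)

lemma transfer_succ : transfer W E n (q + 1) = Tmat (W (n + q)) E * transfer W E n q :=
  revProd_castSucc _

lemma transfer_succ' :
    transfer W E n (q + 1) = transfer W E (n + 1) q * Tmat (W n) E := by
  refine (revProd_succ _).trans ?_
  simp [transfer, TmatWord, revProd, add_assoc, add_comm (1 : ℤ)]

lemma transfer_succ_zero_apply (c : Fin 2) : transfer W E n (q + 1) 0 c =
    (E - W (n + q)) * transfer W E n q 0 c - transfer W E n q 1 c := by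
  simp [transfer_succ, Tmat, Matrix.mul_apply, sub_eq_add_neg]

lemma transfer_succ_one_apply (c : Fin 2) :
    transfer W E n (q + 1) 1 c = transfer W E n q 0 c := by
  simp [transfer_succ, Tmat, Matrix.mul_apply]

variable {W q}

lemma transfer_periodic (hW : Function.Periodic W q) :
    Function.Periodic (fun n => transfer W E n q) q := fun n => by
  simp only [transfer, add_right_comm n (q : ℤ), hW _]

lemma trace_transfer_eq (hW : Function.Periodic W q) :
    (transfer W E n q).trace = (transfer W E 0 q).trace := by
  have hone : Function.Periodic (fun n => (transfer W E n q).trace) 1 := fun n => by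
    rcases q with _ | p
    · rfl
    · have hper : W (n + 1 + p) = W n := by
        rw [← hW n]; push_cast; ring_nf
      simp only [transfer_succ W E (n + 1) p, transfer_succ' W E n p, hper,
        Matrix.trace_mul_comm (Tmat (W n) E)]
  simpa using hone.int_mul_eq n

end Transfer

section Operators

lemma memℓp_comp_add_right (k : ℤ) (f : Ell2) : Memℓp (fun n : ℤ => f (n + k)) 2 := by
  have hsum := (lp.memℓp f).summable (by norm_num)
  exact memℓp_gen (hsum.comp_injective (add_left_injective k))

/-- The translation operator `(S^k f) n = f (n + k)` on `ℓ²(ℤ)`. -/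
def shift (k : ℤ) : Ell2 →L[ℝ] Ell2 :=
  LinearMap.mkContinuous
    { toFun := fun f => (⟨fun n : ℤ => f (n + k), memℓp_comp_add_right k f⟩ : Ell2)
      map_add' := fun _ _ => rfl
      map_smul' := fun _ _ => rfl } 1 fun f => by
    refine lp.norm_le_of_tsum_le (by norm_num) (by positivity) ?_
    rw [one_mul, lp.norm_rpow_eq_tsum (by norm_num)]
    exact ((Equiv.addRight k).tsum_eq (fun n => ‖f n‖ ^ (2 : ENNReal).toReal)).le

@[simp]
lemma shift_apply (k : ℤ) (f : Ell2) (n : ℤ) : shift k f n = f (n + k) := rfl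

lemma norm_shift_le (k : ℤ) : ‖shift k‖ ≤ 1 := LinearMap.mkContinuous_norm_le _ zero_le_one _

lemma star_shift (k : ℤ) : star (shift k) = shift (-k) := by
  symm
  rw [ContinuousLinearMap.star_eq_adjoint, ContinuousLinearMap.eq_adjoint_iff]
  intro f g
  rw [lp.inner_eq_tsum, lp.inner_eq_tsum,
    ← (Equiv.addRight k).tsum_eq fun n => inner ℝ (shift (-k) f n) (g n)]
  simp

/-- Multiplication by a bounded sequence on `ℓ²(ℤ)`. -/
def mulOp (φ : ℤ →ᵇ ℝ) : Ell2 →L[ℝ] Ell2 :=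
  lp.mapCLM 2 (fun n => φ n • ContinuousLinearMap.id ℝ ℝ) (norm_nonneg φ) fun n => by
    simpa [norm_smul] using φ.norm_coe_le_norm n

@[simp]
lemma mulOp_apply (φ : ℤ →ᵇ ℝ) (f : Ell2) (n : ℤ) : mulOp φ f n = φ n * f n := rfl

lemma isSelfAdjoint_mulOp (φ : ℤ →ᵇ ℝ) : IsSelfAdjoint (mulOp φ) := by
  rw [ContinuousLinearMap.isSelfAdjoint_iff_isSymmetric]
  intro f g
  change inner ℝ (mulOp φ f) g = inner ℝ f (mulOp φ g)
  simp only [lp.inner_eq_tsum, mulOp_apply]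
  exact tsum_congr fun n => by simp only [RCLike.inner_apply, map_mul, conj_trivial]; ring

/-- The Schrödinger operator `H_W = Δ + W` on `ℓ²(ℤ)`. -/
def schrodingerOp (W : ℤ →ᵇ ℝ) : Ell2 →L[ℝ] Ell2 := shift (-1) + shift 1 + mulOp W

lemma schrodingerOp_sub_smul_one_apply (W : ℤ →ᵇ ℝ) (E : ℝ) (f : Ell2) (n : ℤ) :
    (schrodingerOp W - E • 1) f n = f (n - 1) + f (n + 1) + (W n - E) * f n := by
  change f (n + -1) + f (n + 1) + W n * f n - E * f n = _
  rw [← sub_eq_add_neg]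
  ring

lemma isSelfAdjoint_schrodingerOp (W : ℤ →ᵇ ℝ) : IsSelfAdjoint (schrodingerOp W) := by
  have hlaplacian : IsSelfAdjoint (shift (-1) + shift 1) := by
    rw [IsSelfAdjoint, star_add, star_shift, star_shift, neg_neg, add_comm (shift 1)]
  exact hlaplacian.add (isSelfAdjoint_mulOp W)

lemma isSelfAdjoint_schrodingerOp_sub_smul_one (W : ℤ →ᵇ ℝ) (E : ℝ) :
    IsSelfAdjoint (schrodingerOp W - E • 1) := by
  rw [IsSelfAdjoint, star_sub, isSelfAdjoint_schrodingerOp W, star_smul, star_one, star_trivial]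

lemma notMem_schrodingerSpectrum_of_isUnit {W : ℤ →ᵇ ℝ} {E : ℝ}
    (h : IsUnit (schrodingerOp W - E • 1)) : E ∉ SchrodingerSpectrum W := by
  have hbij := ContinuousLinearMap.isUnit_iff_bijective.mp h
  exact not_not.mpr ⟨LinearEquiv.ofBijective ((schrodingerOp W - E • 1 : Ell2 →L[ℝ] Ell2) :
    Ell2 →ₗ[ℝ] Ell2) hbij, schrodingerOp_sub_smul_one_apply W E⟩

end Operators

section Floquet

lemma exists_boundedContinuousFunction_of_periodic {φ : ℤ → ℝ} {q : ℕ} (hq : 0 < q)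
    (hφ : Function.Periodic φ q) : ∃ g : ℤ →ᵇ ℝ, ⇑g = φ := by
  have hfinite : (range φ).Finite := by
    rw [← hφ.image_Ioc (by exact_mod_cast hq) 0]
    exact (finite_Ioc _ _).image φ
  obtain ⟨C, hC⟩ := hfinite.isBounded.exists_norm_le
  exact ⟨ofNormedAddCommGroupDiscrete φ C fun n => hC _ (mem_range_self n), rfl⟩

lemma exists_variation_of_constants (W : ℤ →ᵇ ℝ) (E : ℝ) (q : ℕ) :
    ∃ K K' : Ell2 →L[ℝ] Ell2, ∀ (f : Ell2) (n : ℤ),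
      f (n + q) = transfer W E n q 0 0 * f n + transfer W E n q 0 1 * f (n - 1)
        + K ((schrodingerOp W - E • 1) f) n ∧
      f (n + q - 1) = transfer W E n q 1 0 * f n + transfer W E n q 1 1 * f (n - 1)
        + K' ((schrodingerOp W - E • 1) f) n := by
  induction q with
  | zero => exact ⟨0, 0, fun f n => by simp [transfer, TmatWord]⟩
  | succ q ih =>
    obtain ⟨K, K', hK⟩ := ih
    refine ⟨shift q + E • K - shift q * mulOp W * shift (-q) * K - K', K, fun f n => ?_⟩
    obtain ⟨htop, hbot⟩ := hK f n
    set g := (schrodingerOp W - E • 1) f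
    have hnext : g (n + q) = f (n + q - 1) + f (n + q + 1) + (W (n + q) - E) * f (n + q) :=
      schrodingerOp_sub_smul_one_apply W E f (n + q)
    have hval : (shift q + E • K - shift q * mulOp W * shift (-q) * K - K') g n
        = g (n + q) + E * K g n - W (n + q) * K g n - K' g n := by
      change g (n + q) + E * K g n - W (n + q) * K g (n + q + -q) - K' g n = _
      rw [add_neg_cancel_right]
    simp only [transfer_succ_zero_apply, transfer_succ_one_apply, Nat.cast_succ, ← add_assoc,
      add_sub_cancel_right, hval]
    exact ⟨by linear_combination -hnext + (E - W (n + q)) * htop - hbot, htop⟩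

/-- The transfer matrix over the period before `n` is inverted, being unimodular, to express
`f (n - q)`; the off-diagonal terms then cancel and only the trace survives. -/
lemma exists_mul_eq_shift_add_shift_sub_trace {W : ℤ →ᵇ ℝ} {E : ℝ} {q : ℕ} (hq : 0 < q)
    (hW : Function.Periodic W q) : ∃ L : Ell2 →L[ℝ] Ell2, L * (schrodingerOp W - E • 1) =
      shift q + shift (-q) - (transfer W E 0 q).trace • 1 := by
  obtain ⟨K, K', hK⟩ := exists_variation_of_constants W E q
  have hentry (i j : Fin 2) : Function.Periodic (fun n => transfer W E n q i j) q := fun n =>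
    congr_fun₂ (transfer_periodic E hW n) i j
  obtain ⟨β, hβ⟩ := exists_boundedContinuousFunction_of_periodic hq (hentry 0 1)
  obtain ⟨δ, hδ⟩ := exists_boundedContinuousFunction_of_periodic hq (hentry 1 1)
  refine ⟨K + mulOp β * shift (-q) * K' - mulOp δ * shift (-q) * K, ?_⟩
  ext f n
  set g := (schrodingerOp W - E • 1) f
  have hdet := det_TmatWord (fun i : Fin q => W (n + i)) E
  have htrace := trace_transfer_eq E n hW
  have hforward := (hK f n).1
  obtain ⟨htop, hbot⟩ := hK f (n + -q)
  change (transfer W E n q).det = 1 at hdet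
  rw [Matrix.det_fin_two] at hdet
  rw [Matrix.trace_fin_two] at htrace
  have hback : transfer W E (n + -q) q = transfer W E n q := by
    simpa using (transfer_periodic E hW (n + -q)).symm
  rw [hback, neg_add_cancel_right] at htop hbot
  change K g n + β n * K' g (n + -q) - δ n * K g (n + -q)
    = f (n + q) + f (n + -q) - (transfer W E 0 q).trace * f n
  rw [hβ, hδ, ← htrace]
  linear_combination -hforward + transfer W E n q 1 1 * htop - transfer W E n q 0 1 * hbot
    + f (n + -q) * hdet

lemma isUnit_of_isSelfAdjoint_of_mul_eq_one {R : Type*} [Monoid R] [StarMul R] {a b : R}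
    (ha : IsSelfAdjoint a) (hba : b * a = 1) : IsUnit a := by
  have hab : a * star b = 1 := by simpa [ha.star_eq] using congr_arg star hba
  exact isUnit_iff_exists.mpr ⟨b, by rw [left_inv_eq_right_inv hba hab, hab], hba⟩

lemma isUnit_shift_add_shift_sub_smul_one (k : ℤ) {τ : ℝ} (hτ : 2 < |τ|) :
    IsUnit (shift k + shift (-k) - τ • 1) := by
  have hnorm : ‖shift k + shift (-k)‖ ≤ 2 := by
    linarith [norm_add_le (shift k) (shift (-k)), norm_shift_le k, norm_shift_le (-k)]
  have hone : ‖(1 : Ell2 →L[ℝ] Ell2)‖ ≤ 1 := ContinuousLinearMap.norm_id_le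
  have hmem : τ ∈ resolventSet ℝ (shift k + shift (-k)) :=
    spectrum.mem_resolventSet_of_norm_lt_mul <| by
      rw [Real.norm_eq_abs]; nlinarith [norm_nonneg (1 : Ell2 →L[ℝ] Ell2)]
  rw [spectrum.mem_resolventSet_iff, Algebra.algebraMap_eq_smul_one] at hmem
  simpa using hmem.neg

theorem notMem_schrodingerSpectrum_of_two_lt_abs_trace {q : ℕ} {w : Fin q → ℝ} {E : ℝ}
    (htr : 2 < |(TmatWord w E).trace|) : E ∉ SchrodingerSpectrum (perExt w) := by
  have hq : 0 < q := Nat.pos_of_ne_zero <| by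
    rintro rfl
    norm_num [TmatWord] at htr
  obtain ⟨W, hW⟩ := exists_boundedContinuousFunction_of_periodic hq (perExt_periodic w)
  have htransfer : transfer W E 0 q = TmatWord w E := by
    simp only [transfer, hW, zero_add, perExt_natCast]
  obtain ⟨L, hL⟩ := exists_mul_eq_shift_add_shift_sub_trace (E := E) hq (hW ▸ perExt_periodic w)
  rw [htransfer] at hL
  obtain ⟨u, hu⟩ := isUnit_shift_add_shift_sub_smul_one q htr
  rw [← hW]
  refine notMem_schrodingerSpectrum_of_isUnit
    (isUnit_of_isSelfAdjoint_of_mul_eq_one (isSelfAdjoint_schrodingerOp_sub_smul_one W E)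
      (b := ↑u⁻¹ * L) ?_)
  rw [mul_assoc, hL, ← hu, Units.inv_mul]

end Floquet

section Hyperbolic

open Matrix Real Topology

lemma sin_smul_pow {M : Matrix (Fin 2) (Fin 2) ℝ} {θ : ℝ} (hdet : M.det = 1)
    (htr : M.trace = 2 * cos θ) (N : ℕ) :
    sin θ • M ^ N = sin (N * θ) • M - sin ((N - 1) * θ) • 1 := by
  have cayley_hamilton : M * M = (2 * cos θ) • M - 1 := by
    have h := aeval_self_charpoly M
    rw [charpoly_fin_two, hdet, htr] at h
    simp only [pow_two, map_mul, map_one, map_add, Polynomial.aeval_sub, Polynomial.aeval_X,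
      Polynomial.aeval_C, ← Algebra.smul_def, Algebra.smul_mul_assoc] at h
    linear_combination (norm := module) h
  induction N with
  | zero => simp
  | succ N ih =>
    have hsin : sin ((N + 1) * θ) =
        2 * cos θ * sin (N * θ) - sin ((N - 1) * θ) := by
      rw [add_one_mul, sub_one_mul, sin_add, sin_sub]
      ring
    rw [pow_succ, ← smul_mul_assoc, ih, sub_mul, smul_mul_assoc, cayley_hamilton, Nat.cast_succ,
      hsin, add_sub_cancel_right]
    simp only [smul_mul_assoc, one_mul]
    module

lemma trace_mul_transvection (A : Matrix (Fin 2) (Fin 2) ℝ) (a : ℝ) :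
    (A * transvection 1 0 a).trace = A.trace + A 0 1 * a := by
  simp [transvection, mul_add, trace_fin_two, Matrix.mul_apply, Fin.sum_univ_two]

lemma trace_pow_mul_transvection {M : Matrix (Fin 2) (Fin 2) ℝ} {θ : ℝ} (hdet : M.det = 1)
    (htr : M.trace = 2 * cos θ) (hθ : sin θ ≠ 0) (N : ℕ) (a : ℝ) :
    (M ^ N * transvection 1 0 a).trace =
      2 * cos (N * θ) + a * M 0 1 / sin θ * sin (N * θ) := by
  have hpow := sin_smul_pow hdet htr N
  have hsub : sin ((N - 1) * θ) =
      sin (N * θ) * cos θ - cos (N * θ) * sin θ := by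
    rw [sub_one_mul, sin_sub]
  have htrace := congr_arg trace hpow
  have hentry := congr_fun₂ hpow 0 1
  simp only [trace_smul, trace_sub, trace_one, Fintype.card_fin, Nat.cast_ofNat, smul_eq_mul,
    htr] at htrace
  simp only [Matrix.sub_apply, Matrix.smul_apply, smul_eq_mul, one_apply_ne zero_ne_one, mul_zero,
    sub_zero] at hentry
  rw [trace_mul_transvection]
  field_simp
  linear_combination htrace + a * hentry - 2 * hsub

lemma exists_irrational_abs_two_mul_cos_sub_lt {α η : ℝ} (hα : |α| ≤ 2) (hη : 0 < η) :
    ∃ ξ : ℝ, Irrational ξ ∧ |2 * cos (2 * π * ξ) - α| < η := by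
  obtain ⟨hα₁, hα₂⟩ := abs_le.mp hα
  have hcont : Continuous fun ξ : ℝ => |2 * cos (2 * π * ξ) - α| := by fun_prop
  have hvalue : 2 * cos (2 * π * (arccos (α / 2) / (2 * π))) = α := by
    rw [mul_div_cancel₀ _ (by positivity), cos_arccos (by linarith) (by linarith)]
    ring
  obtain ⟨ξ, hξ, hirr⟩ := dense_irrational.inter_open_nonempty _ (isOpen_lt hcont continuous_const)
    ⟨arccos (α / 2) / (2 * π), by simpa [hvalue] using hη⟩
  exact ⟨ξ, hirr, hξ⟩

lemma exists_abs_mul_sub_round_lt {ξ r : ℝ} (hr : 0 < r) :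
    ∃ k : ℕ, 0 < k ∧ |k * ξ - round (k * ξ)| < r := by
  obtain ⟨n, hn⟩ := exists_nat_one_div_lt hr
  obtain ⟨k, hk, -, hle⟩ := exists_nat_abs_mul_sub_round_le ξ n.succ_pos
  refine ⟨k, hk, hle.trans_lt (lt_of_le_of_lt ?_ hn)⟩
  gcongr
  linarith

/-- `2 cos φ + |κ sin φ| - 2 = 2 |sin (φ / 2)| (|κ cos (φ / 2)| - 2 |sin (φ / 2)|)` is positive for
small `φ ≠ 0`, and by Dirichlet's theorem some multiple of `2πξ` is small modulo `2π`. -/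
lemma exists_two_lt_two_mul_cos_add_abs_sin {ξ κ : ℝ} (hξ : Irrational ξ) (hκ : κ ≠ 0) :
    ∃ k : ℕ, 0 < k ∧
      2 < 2 * cos (k * (2 * π * ξ)) + |κ * sin (k * (2 * π * ξ))| := by
  have hnear : ∀ᶠ t in 𝓝 (0 : ℝ), 2 * |sin (π * t)| < |κ * cos (π * t)| :=
    (by fun_prop : Continuous fun t : ℝ => 2 * |sin (π * t)|).continuousAt.eventually_lt
      (by fun_prop : Continuous fun t : ℝ => |κ * cos (π * t)|).continuousAt
      (by simpa using hκ)
  obtain ⟨r, hr, hball⟩ := Metric.eventually_nhds_iff.mp hnear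
  obtain ⟨k, hk, hround⟩ := exists_abs_mul_sub_round_lt (ξ := ξ) hr
  set t := k * ξ - round (k * ξ) with ht
  have hangle : k * (2 * π * ξ) = 2 * (π * t) + round (k * ξ) * (2 * π) := by
    rw [ht]; ring
  have hlt := hball (by simpa using hround)
  have hsin : 0 < |sin (π * t)| := by
    rw [abs_pos, Ne, sin_eq_zero_iff]
    rintro ⟨j, hj⟩
    refine ((hξ.natCast_mul hk.ne').sub_intCast (round (k * ξ))).ne_int j ?_
    exact mul_left_cancel₀ pi_ne_zero (by rw [← ht]; linarith)
  refine ⟨k, hk, ?_⟩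
  rw [hangle, cos_add_int_mul_two_pi, sin_add_int_mul_two_pi, cos_two_mul',
    sin_two_mul]
  have habs : |κ * (2 * sin (π * t) * cos (π * t))| =
      2 * |sin (π * t)| * |κ * cos (π * t)| := by
    rw [mul_left_comm, abs_mul, abs_mul, abs_two]
  rw [habs]
  nlinarith [mul_lt_mul_of_pos_left hlt hsin, sq_abs (sin (π * t)),
    sin_sq_add_cos_sq (π * t)]

lemma exists_two_lt_abs_trace_pow_mul_transvection {M : Matrix (Fin 2) (Fin 2) ℝ} {ξ d : ℝ}
    (hdet : M.det = 1) (hξ : Irrational ξ) (htr : M.trace = 2 * cos (2 * π * ξ)) (hM : M 0 1 ≠ 0)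
    (hd : 0 < d) : ∃ (N : ℕ) (s : ℝ), |s| = d ∧
      2 < |(M ^ (N + 1) * transvection 1 0 s).trace| := by
  set θ := 2 * π * ξ with hθ
  have hsin : sin θ ≠ 0 := by
    rw [Ne, sin_eq_zero_iff]
    rintro ⟨j, hj⟩
    refine (hξ.natCast_mul two_ne_zero).ne_int j (mul_left_cancel₀ pi_ne_zero ?_)
    rw [mul_comm π (j : ℝ), hj, hθ]
    push_cast
    ring
  obtain ⟨k, hk, hlt⟩ := exists_two_lt_two_mul_cos_add_abs_sin (κ := d * M 0 1 / sin θ) hξ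
    (by positivity)
  rw [← hθ] at hlt
  obtain ⟨N, rfl⟩ := Nat.exists_eq_add_one.mpr hk
  obtain ⟨s, hs, hsign⟩ : ∃ s, |s| = d ∧ s * M 0 1 / sin θ * sin ((N + 1 : ℕ) * θ) =
      |d * M 0 1 / sin θ * sin ((N + 1 : ℕ) * θ)| := by
    rcases abs_choice (d * M 0 1 / sin θ * sin ((N + 1 : ℕ) * θ)) with h | h
    · exact ⟨d, abs_of_pos hd, h.symm⟩
    · exact ⟨-d, by rw [abs_neg, abs_of_pos hd], by rw [h]; ring⟩
  refine ⟨N, s, hs, lt_abs.mpr (Or.inl ?_)⟩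
  rwa [trace_pow_mul_transvection hdet htr hsin, hsign]

/-- If `G` is not already hyperbolic, a small shear makes it elliptic with an irrational angle; the
product of many copies of the result then becomes hyperbolic under one further small shear. -/
lemma exists_two_lt_abs_trace_revProd_mul_transvection {G : Matrix (Fin 2) (Fin 2) ℝ} {δ : ℝ}
    (hdet : G.det = 1) (hG : G 0 1 ≠ 0) (hδ : 0 < δ) :
    ∃ (N : ℕ) (a : Fin (N + 1) → ℝ), (∀ i, |a i| < δ) ∧
      2 < |(revProd fun i => G * transvection 1 0 (a i)).trace| := by
  rcases lt_or_ge 2 |G.trace| with hyperbolic | htr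
  · exact ⟨0, 0, fun _ => by simpa using hδ, by simpa [revProd] using hyperbolic⟩
  obtain ⟨ξ, hξ, hclose⟩ := exists_irrational_abs_two_mul_cos_sub_lt htr
    (mul_pos hδ (abs_pos.mpr hG))
  set c := (2 * cos (2 * π * ξ) - G.trace) / G 0 1 with hc
  have hcδ : |c| < δ := by rwa [hc, abs_div, div_lt_iff₀ (abs_pos.mpr hG)]
  set M := G * transvection 1 0 c with hM
  have hMtr : M.trace = 2 * cos (2 * π * ξ) := by
    rw [hM, trace_mul_transvection, hc]
    field_simp
    ring
  have hMdet : M.det = 1 := by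
    rw [hM, det_mul, hdet, det_transvection_of_ne _ _ one_ne_zero, one_mul]
  have hM01 : M 0 1 ≠ 0 := by
    simpa [hM, transvection, Matrix.mul_apply, Fin.sum_univ_two] using hG
  obtain ⟨N, s, hs, hlt⟩ := exists_two_lt_abs_trace_pow_mul_transvection hMdet hξ hMtr hM01
    (half_pos (sub_pos.mpr hcδ))
  have hcs : |c + s| < δ := by linarith [abs_add_le c s]
  refine ⟨N, Fin.cons (c + s) fun _ => c, fun i => Fin.cases hcs (fun _ => hcδ) i, ?_⟩
  have hfirst : G * transvection 1 0 (c + s) = M * transvection 1 0 s := by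
    rw [hM, Matrix.mul_assoc, transvection_mul_transvection_same _ _ one_ne_zero]
  rw [revProd_succ]
  simp only [Fin.cons_succ, Fin.cons_zero, hfirst]
  rwa [revProd_const, ← Matrix.mul_assoc, ← pow_succ]

end Hyperbolic

section ShearEquivariance

open Matrix

/-- `W` is shear equivariant along `e` if translating its argument by `a • e` multiplies its value
on the right by the lower unipotent matrix with entry `a`. -/
def ShearEquivariant {V : Type*} [AddCommGroup V] [Module ℝ V] (e : V)
    (W : V → Matrix (Fin 2) (Fin 2) ℝ) : Prop :=
  ∀ (x : V) (a : ℝ), W (x + a • e) = W x * transvection 1 0 a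

lemma shearEquivariant_Tmat (E : ℝ) : ShearEquivariant (1 : ℝ) fun v => Tmat v E := fun v a => by
  ext i j
  fin_cases i <;> fin_cases j <;>
    simp [Tmat, transvection, Matrix.mul_apply, Fin.sum_univ_two, ← sub_eq_add_neg, sub_sub]

variable {V : Type*} [AddCommGroup V] [Module ℝ V] {e : V} {W : V → Matrix (Fin 2) (Fin 2) ℝ}

namespace ShearEquivariant

lemma mul_left (hW : ShearEquivariant e W) (A : Matrix (Fin 2) (Fin 2) ℝ) :
    ShearEquivariant e fun x => A * W x := fun x a => by
  simp only [hW x a, Matrix.mul_assoc]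

lemma revProd_comp (hW : ShearEquivariant e W) (M : ℕ) :
    ShearEquivariant (Pi.single 0 e) fun x : Fin (M + 1) → V => revProd fun i => W (x i) :=
  fun x a => by simp [revProd_succ, hW _ a, Matrix.mul_assoc]

variable [TopologicalSpace V] [ContinuousAdd V] [ContinuousSMul ℝ V]

lemma dense_mul_apply_ne_zero {U : Type*} [TopologicalSpace U]
    {B : U → Matrix (Fin 2) (Fin 2) ℝ} (hW : ShearEquivariant e W)
    (hWdense : Dense {x | W x 0 1 ≠ 0}) (hBdense : Dense {u | B u 0 1 ≠ 0}) :
    Dense {p : U × V | (W p.2 * B p.1) 0 1 ≠ 0} := by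
  refine Dense.of_closure ((hBdense.prod hWdense).mono ?_)
  rintro ⟨u, x⟩ ⟨hu, hx⟩
  have hentry (a : ℝ) : (W (x + a • e) * B u) 0 1 = (W x * B u) 0 1 + a * (W x 0 1 * B u 0 1) := by
    simp [hW x a, transvection, Matrix.mul_apply, Fin.sum_univ_two]
    ring
  have hdense : Dense {a : ℝ | (W (x + a • e) * B u) 0 1 ≠ 0} :=
    (dense_compl_singleton (-(W x * B u) 0 1 / (W x 0 1 * B u 0 1))).mono fun a ha hzero => by
      refine ha ((eq_div_iff (mul_ne_zero hx hu)).mpr ?_)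
      linarith [hentry a]
  have hcont : Continuous fun a : ℝ => (u, x + a • e) := by fun_prop
  simpa using map_mem_closure hcont (hdense 0) fun a ha => ha

lemma dense_revProd_apply_ne_zero (hW : ShearEquivariant e W) (hdense : Dense {x | W x 0 1 ≠ 0})
    (M : ℕ) :
    Dense {x : Fin (M + 1) → V | (revProd fun i => W (x i)) 0 1 ≠ 0} := by
  induction M with
  | zero =>
    simpa [revProd] using hdense.preimage (isOpenMap_eval (X := fun _ : Fin 1 => V) 0)
  | succ M ih =>
    have hprod := ((hW.revProd_comp M).dense_mul_apply_ne_zero ih hdense).preimage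
      (Fin.consEquivL ℝ fun _ : Fin (M + 2) => V).symm.toHomeomorph.isOpenMap
    refine hprod.mono fun x hx => ?_
    rw [mem_ofPred_eq, revProd_succ]
    exact hx

lemma exists_two_lt_abs_trace (hW : ShearEquivariant e W) (hdet : ∀ x, (W x).det = 1)
    (hdense : Dense {x | W x 0 1 ≠ 0}) {U : Set V} (hU : IsOpen U) (hne : U.Nonempty) :
    ∃ (N : ℕ) (y : Fin (N + 1) → V), (∀ i, y i ∈ U) ∧
      2 < |(revProd fun i => W (y i)).trace| := by
  obtain ⟨z, hzU, hz⟩ := hdense.inter_open_nonempty U hU hne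
  have hnear : ∀ᶠ a in nhds (0 : ℝ), z + a • e ∈ U :=
    (by fun_prop : Continuous fun a : ℝ => z + a • e).continuousAt.eventually_mem
      (hU.mem_nhds (by simpa using hzU))
  obtain ⟨δ, hδ, hball⟩ := Metric.eventually_nhds_iff.mp hnear
  obtain ⟨N, a, ha, hlt⟩ := exists_two_lt_abs_trace_revProd_mul_transvection (hdet z) hz hδ
  refine ⟨N, fun i => z + a i • e, fun i => hball (by simpa using ha i), ?_⟩
  simpa only [hW z] using hlt

end ShearEquivariant

end ShearEquivariance

section GenericWords

lemma TmatWord_append {p q : ℕ} (x : Fin p → ℝ) (b : Fin q → ℝ) (E : ℝ) :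
    TmatWord (Fin.append x b) E = TmatWord b E * TmatWord x E := by
  have hmap {k : ℕ} (w : Fin k → ℝ) :
      (List.ofFn fun i => Tmat (w i) E) = (List.ofFn w).map (Tmat · E) := by
    rw [List.map_ofFn]; rfl
  simp only [TmatWord, hmap, List.ofFn_fin_append, List.map_append, List.reverse_append,
    List.prod_append]

lemma shearEquivariant_TmatWord_append {m : ℕ} (b : Fin m → ℝ) (n : ℕ) (E : ℝ) :
    ShearEquivariant (Pi.single 0 1) fun x : Fin (n + 1) → ℝ => TmatWord (Fin.append x b) E := by
  simp only [TmatWord_append]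
  exact ((shearEquivariant_Tmat E).revProd_comp n).mul_left (TmatWord b E)

lemma TmatWord_append_zero_apply_zero_one {m : ℕ} (b : Fin m → ℝ) (n : ℕ) (E : ℝ) :
    TmatWord (Fin.append (fun _ : Fin (n + 1) => (0 : ℝ)) b) E 0 1 =
      -TmatWord (Fin.append (fun _ : Fin n => (0 : ℝ)) b) E 0 0 := by
  have hfirst : TmatWord (fun _ : Fin (n + 1) => (0 : ℝ)) E =
      TmatWord (fun _ : Fin n => (0 : ℝ)) E * Tmat 0 E := revProd_succ _
  rw [TmatWord_append, hfirst, ← Matrix.mul_assoc, ← TmatWord_append]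
  simp [Tmat, Matrix.mul_apply]

lemma dense_ne_zero_of_analyticOnNhd {V F : Type*} [NormedAddCommGroup V] [NormedSpace ℝ V]
    [NormedAddCommGroup F] [NormedSpace ℝ F] {f : V → F} (hf : AnalyticOnNhd ℝ f univ) {x₀ : V}
    (hx₀ : f x₀ ≠ 0) : Dense {x | f x ≠ 0} := by
  rw [dense_iff_inter_open]
  rintro U hU ⟨z, hz⟩
  by_contra! hempty
  have hzero : f =ᶠ[nhds z] 0 := by
    filter_upwards [hU.mem_nhds hz] with x hx
    by_contra hfx
    exact (hempty ▸ ⟨hx, hfx⟩ : x ∈ (∅ : Set V))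
  exact hx₀ (congr_fun (hf.eq_of_eventuallyEq analyticOnNhd_const hzero) x₀)

lemma analyticOnNhd_TmatWord_apply {V : Type*} [NormedAddCommGroup V] [NormedSpace ℝ V] {s : Set V}
    {q : ℕ} {w : Fin q → V → ℝ} (hw : ∀ i, AnalyticOnNhd ℝ (w i) s) (E : ℝ) (i j : Fin 2) :
    AnalyticOnNhd ℝ (fun v => TmatWord (fun k => w k v) E i j) s := by
  induction q generalizing i with
  | zero => exact analyticOnNhd_const
  | succ q ih =>
    have hlast (v : V) : TmatWord (fun k => w k v) E = Tmat (w (Fin.last q) v) E *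
      TmatWord (fun k : Fin q => w k.castSucc v) E := revProd_castSucc _
    have ih' := ih fun k => hw k.castSucc
    fin_cases i
    · have hentry (v : V) : TmatWord (fun k => w k v) E 0 j =
          (E - w (Fin.last q) v) * TmatWord (fun k : Fin q => w k.castSucc v) E 0 j -
            TmatWord (fun k : Fin q => w k.castSucc v) E 1 j := by
        simp [hlast, Tmat, Matrix.mul_apply, sub_eq_add_neg]
      simp only [Fin.zero_eta, hentry]
      exact ((analyticOnNhd_const.sub (hw (Fin.last q))).mul (ih' 0)).sub (ih' 1)
    · simpa [hlast, Tmat, Matrix.mul_apply] using ih' 0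

lemma analyticOnNhd_append_apply {m n : ℕ} (b : Fin m → ℝ) (i : Fin (n + m)) :
    AnalyticOnNhd ℝ (fun x : Fin n → ℝ => Fin.append x b i) univ := by
  induction i using Fin.addCases with
  | left i =>
    simp only [Fin.append_left]
    exact (ContinuousLinearMap.proj i : (Fin n → ℝ) →L[ℝ] ℝ).analyticOnNhd univ
  | right i => simpa using analyticOnNhd_const

lemma dense_TmatWord_append_apply_ne_zero {m : ℕ} (b : Fin m → ℝ) (n : ℕ) {E : ℝ}
    (hE : TmatWord (Fin.append (fun _ : Fin n => (0 : ℝ)) b) E 0 0 ≠ 0) :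
    Dense {x : Fin (n + 1) → ℝ | TmatWord (Fin.append x b) E 0 1 ≠ 0} :=
  dense_ne_zero_of_analyticOnNhd (analyticOnNhd_TmatWord_apply (analyticOnNhd_append_apply b) E 0 1)
    (x₀ := fun _ => 0) (by rwa [TmatWord_append_zero_apply_zero_one, neg_ne_zero])

end GenericWords

section ExceptionalSet

open Polynomial

lemma exists_monic_eval_eq_TmatWord_apply {q : ℕ} (x : Fin q → ℝ) :
    ∃ p r : ℝ[X], p.Monic ∧ r.degree < p.degree ∧
      ∀ E, TmatWord x E 0 0 = p.eval E ∧ TmatWord x E 1 0 = r.eval E := by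
  induction q with
  | zero => exact ⟨1, 0, monic_one, by simp, fun E => by simp [TmatWord]⟩
  | succ q ih =>
    obtain ⟨p, r, hp, hdeg, heval⟩ := ih fun i => x i.castSucc
    set v := x (Fin.last q)
    have hdeg' : p.degree < ((X - Polynomial.C v) * p).degree := by
      rw [degree_mul, degree_X_sub_C, degree_eq_natDegree hp.ne_zero]
      norm_cast
      omega
    refine ⟨(X - Polynomial.C v) * p - r, p,
      ((monic_X_sub_C v).mul hp).sub_of_left (hdeg.trans hdeg'), ?_, fun E => ?_⟩
    · rwa [degree_sub_eq_left_of_degree_lt (hdeg.trans hdeg')]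
    · have hlast : TmatWord x E = Tmat v E * TmatWord (fun i : Fin q => x i.castSucc) E :=
        revProd_castSucc _
      obtain ⟨h0, h1⟩ := heval E
      simp [hlast, Tmat, Matrix.mul_apply, Fin.sum_univ_two, h0, h1, sub_eq_add_neg]

lemma finite_setOf_TmatWord_apply_eq_zero {q : ℕ} (x : Fin q → ℝ) :
    {E : ℝ | TmatWord x E 0 0 = 0}.Finite := by
  obtain ⟨p, _, hp, -, heval⟩ := exists_monic_eval_eq_TmatWord_apply x
  simpa only [(heval _).1, ← IsRoot.def] using finite_setOfPred_isRoot hp.ne_zero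

lemma isDiscreteSet_of_finite {S : Set ℝ} (hS : S.Finite) : IsDiscreteSet S :=
  fun _ hacc => Set.Infinite.of_accPt hacc hS

end ExceptionalSet

section Words

lemma TmatWord_concatWords {N M : ℕ} (X : Fin N → Fin M → ℝ) (E : ℝ) :
    TmatWord (concatWords X) E = revProd fun i => TmatWord (X i) E :=
  revProd_concatWords fun i j => Tmat (X i j) E

lemma dist_append_right_le {n m : ℕ} (x x' : Fin n → ℝ) (b : Fin m → ℝ) :
    dist (Fin.append x b) (Fin.append x' b) ≤ dist x x' := by
  refine (dist_pi_le_iff dist_nonneg).mpr fun i => ?_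
  induction i using Fin.addCases with
  | left i => simpa using dist_le_pi_dist x x' i
  | right i => simp

lemma exists_two_lt_abs_trace_near {m : ℕ} (b : Fin m → ℝ) (n : ℕ) {E : ℝ}
    (hE : TmatWord (Fin.append (fun _ : Fin n => (0 : ℝ)) b) E 0 0 ≠ 0) {M : ℕ}
    (x : Fin (M + 1) → Fin (n + 1) → ℝ) {ε : ℝ} (hε : 0 < ε) :
    ∃ (N : ℕ) (X : Fin (N + 1) → Fin (M + 1) → Fin (n + 1) → ℝ), (∀ i, dist (X i) x < ε) ∧
      2 < |(TmatWord (concatWords (concatWords fun i j => Fin.append (X i j) b)) E).trace| := by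
  have hW := shearEquivariant_TmatWord_append b n E
  obtain ⟨N, X, hX, hlt⟩ := (hW.revProd_comp M).exists_two_lt_abs_trace
    (fun z => det_revProd fun i => det_TmatWord _ E)
    (hW.dense_revProd_apply_ne_zero (dense_TmatWord_append_apply_ne_zero b n hE) M)
    Metric.isOpen_ball ⟨x, Metric.mem_ball_self hε⟩
  refine ⟨N, X, hX, ?_⟩
  rw [TmatWord_concatWords]
  exact (revProd_concatWords fun i j => TmatWord (Fin.append (X i j) b) E) ▸ hlt

end Words

/-- For any `m ∈ ℕ`, `b ∈ ℝ^m`, `n ∈ ℕ`, the set `{x♯b : x ∈ ℝ^n} ⊆ ℝ^{n+m}` is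
gap-rich, with exceptional set the finite set
`S = {E : (T(0^{♯(n-1)}♯b,E))₁₁ = 0}`. -/
theorem append_const_gapRich (m : ℕ) (hm : 0 < m) (b : Fin m → ℝ) (n : ℕ) (hn : 0 < n) :
    {E : ℝ | TmatWord (Fin.append (fun _ : Fin (n - 1) => (0 : ℝ)) b) E 0 0 = 0}.Finite ∧
    GapRich (n + m) {z : Fin (n + m) → ℝ | ∃ x : Fin n → ℝ, z = Fin.append x b}
      {E : ℝ | TmatWord (Fin.append (fun _ : Fin (n - 1) => (0 : ℝ)) b) E 0 0 = 0} := by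
  have hfinite := finite_setOf_TmatWord_apply_eq_zero
    (Fin.append (fun _ : Fin (n - 1) => (0 : ℝ)) b)
  refine ⟨hfinite, isDiscreteSet_of_finite hfinite, fun E hE M hM x hx ε hε => ?_⟩
  obtain ⟨n, rfl⟩ := Nat.exists_eq_add_one.mpr hn
  obtain ⟨M, rfl⟩ := Nat.exists_eq_add_one.mpr hM
  choose z hz using hx
  obtain ⟨N, X, hX, htr⟩ := exists_two_lt_abs_trace_near b n hE z hε
  refine ⟨(N + 1) * (M + 1), Nat.mul_pos N.succ_pos hM,
    concatWords fun i j => Fin.append (X i j) b, fun i => ⟨_, rfl⟩, ?_, ?_⟩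
  · refine dist_perExt_concatWords_lt N.succ_pos hM fun i j => ?_
    rw [hz j, dist_comm]
    exact (dist_append_right_le _ _ b).trans_lt ((dist_le_pi_dist (X i) z j).trans_lt (hX i))
  · rw [agg_perExt]
    exact notMem_schrodingerSpectrum_of_two_lt_abs_trace htr
end
end

section
/- Let X be a Banach space and suppose A : X × ℝ → SL(2,ℝ) is analytic and non-ahyperbolic with exceptional set S. Then for every E ∈ ℝ∖S, every x ∈ X, and every ε > 0, there exist k ∈ ℕ and a word y = y₁⋯y_k ∈ X^k such that ‖y_j − x‖ < ε for all 1 ≤ j ≤ k and A(y,E) := A(y_k,E)⋯A(y₁,E) is hyperbolic. -/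
/-!
Suppose that no word with letters near `x` is hyperbolic. The trace of `A(y,E)` is not constant for
`y` near `x`: otherwise it would be constant everywhere by analyticity, while its absolute value is
at most `2` at `x` and exceeds `2` at a point `y₀` with `A(y₀,E)` hyperbolic. Hence it takes a
transcendental value near `x`. As matrices of finite order have integral trace, this gives an
elliptic `B = A(y,E)` of infinite order.

Being elliptic, `B` is the image `φ(ζ)` of some `ζ` on the unit circle under an algebra embedding
`φ : ℂ → M₂(ℝ)`. For `C = A(z,E)` with `z` near `x`, all words `z, y, …, y` satisfy
`|tr (Bⁿ C)| ≤ 2`, and since the powers of `ζ` are dense, `|tr (φ(w) C)| ≤ 2` on the whole circle.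
This says exactly that `det [B, C] ≥ 0`. But `det [B, C] ≤ 0` whenever `B` is elliptic, so
`det [B, A(z,E)]` vanishes for `z` near `x`, hence everywhere by analyticity. It is negative at
`z = y₀`, because `4 det [B, C] ≤ (tr² B - 4) (tr² C - 4)`.
-/

open Set

noncomputable section

/-- `SL(2,ℝ)`. -/
abbrev SL2R := Matrix.SpecialLinearGroup (Fin 2) ℝ

/-- A matrix in SL(2,ℝ) is hyperbolic if `|tr| > 2`. -/
def IsHyperbolic (M : SL2R) : Prop :=
  2 < |Matrix.trace (M : Matrix (Fin 2) (Fin 2) ℝ)|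

/-- A matrix in SL(2,ℝ) is elliptic if `|tr| < 2`. -/
def IsElliptic (M : SL2R) : Prop :=
  |Matrix.trace (M : Matrix (Fin 2) (Fin 2) ℝ)| < 2

/-- Extension of `A` to words: `A(y₁⋯y_m, E) = A(y_m,E) ⋯ A(y₁,E)`. -/
def wordProd {X : Type*} (A : X → ℝ → SL2R) {m : ℕ} (y : Fin m → X) (E : ℝ) : SL2R :=
  ((List.ofFn fun i => A (y i) E).reverse).prod

/-- `A : X × ℝ → SL(2,ℝ)` is non-ahyperbolic with exceptional set `S`:
`S` is discrete and for every `E ∉ S` some `A(y,E)` is hyperbolic. -/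
def NonAhyperbolic {X : Type*} (A : X → ℝ → SL2R) (S : Set ℝ) : Prop :=
  IsDiscreteSet S ∧ ∀ E : ℝ, E ∉ S → ∃ y : X, IsHyperbolic (A y E)

/-- `A : X × ℝ → SL(2,ℝ)` is gap-rich with exceptional set `S`: `S` is discrete
and for every `E ∉ S`, any word over `X` can be perturbed (in the uniform metric
on periodic extensions) to a word whose matrix at `E` is hyperbolic. -/
def GapRichMap {X : Type*} [NormedAddCommGroup X] (A : X → ℝ → SL2R) (S : Set ℝ) : Prop :=
  IsDiscreteSet S ∧
  ∀ E : ℝ, E ∉ S → ∀ m : ℕ, 0 < m → ∀ x : Fin m → X, ∀ ε : ℝ, 0 < ε →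
    ∃ l : ℕ, 0 < l ∧ ∃ y : Fin l → X,
      (∀ j : ℤ, dist (perExt x j) (perExt y j) < ε) ∧
      IsHyperbolic (wordProd A y E)

open scoped Topology

section Commutator

variable {R : Type*} [CommRing R]

lemma four_mul_det_lie (B C : Matrix (Fin 2) (Fin 2) R) :
    4 * ⁅B, C⁆.det = B.discr * C.discr - (2 * (B * C).trace - B.trace * C.trace) ^ 2 := by
  simp only [Matrix.discr_fin_two, Matrix.trace_fin_two, Matrix.det_fin_two, Ring.lie_def,
    Matrix.sub_apply, Matrix.mul_apply, Fin.sum_univ_two]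
  ring

-- `⁅B, C⁆` is traceless and orthogonal to `B` for the trace form. On such matrices `-det` is, up to
-- the factor `B 0 1`, a binary quadratic form of discriminant `discr B`; the square is completed.
lemma four_mul_sq_mul_det_lie (B C : Matrix (Fin 2) (Fin 2) R) :
    4 * B 0 1 ^ 2 * ⁅B, C⁆.det = B.discr * ⁅B, C⁆ 0 1 ^ 2 -
      (2 * B 0 1 * ⁅B, C⁆ 0 0 + (B 1 1 - B 0 0) * ⁅B, C⁆ 0 1) ^ 2 := by
  simp only [Matrix.discr_fin_two, Matrix.trace_fin_two, Matrix.det_fin_two, Ring.lie_def,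
    Matrix.sub_apply, Matrix.mul_apply, Fin.sum_univ_two]
  ring

variable [LinearOrder R] [IsStrictOrderedRing R] {B C : Matrix (Fin 2) (Fin 2) R}

lemma det_lie_neg (hB : B.IsElliptic) (hC : C.IsHyperbolic) : ⁅B, C⁆.det < 0 := by
  have hBC : B.discr * C.discr < 0 := mul_neg_of_neg_of_pos hB hC
  linarith [four_mul_det_lie B C, sq_nonneg (2 * (B * C).trace - B.trace * C.trace)]

lemma det_lie_nonpos (hB : B.IsElliptic) (C : Matrix (Fin 2) (Fin 2) R) : ⁅B, C⁆.det ≤ 0 := by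
  have hpos : 0 < 4 * B 0 1 ^ 2 := by have := hB.b_ne_zero; positivity
  refine nonpos_of_mul_nonpos_right ?_ hpos
  rw [four_mul_sq_mul_det_lie]
  exact sub_nonpos_of_le ((mul_nonpos_of_nonpos_of_nonneg hB.le (sq_nonneg _)).trans (sq_nonneg _))

end Commutator

section FiniteOrder

variable {R K : Type*} [CommRing R] [Field K] [Algebra R K]

lemma isIntegral_of_mem_spectrum {A : Type*} [Ring A] [Algebra R A] [Algebra K A]
    [IsScalarTower R K A] {a : A} (ha : IsIntegral R a) {μ : K} (hμ : μ ∈ spectrum K a) :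
    IsIntegral R μ := by
  obtain ⟨p, hp, hpa⟩ := ha
  have : Nontrivial A := by
    by_contra hA
    rw [not_nontrivial_iff_subsingleton] at hA
    simp [spectrum.of_subsingleton] at hμ
  refine ⟨p, hp, ?_⟩
  have hμp := spectrum.subset_polynomial_aeval a (p.map (algebraMap R K)) ⟨μ, hμ, rfl⟩
  have hpa' : Polynomial.aeval a p = 0 := hpa
  simpa [Polynomial.aeval_map_algebraMap, hpa', Polynomial.eval_map] using hμp

lemma isIntegral_matrix_trace {n : Type*} [Fintype n] [DecidableEq n] {B : Matrix n n K}
    (hB : IsIntegral R B) : IsIntegral R B.trace := by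
  let ι := algebraMap K (AlgebraicClosure K)
  suffices IsIntegral R (ι B.trace) from (isIntegral_algebraMap_iff ι.injective).1 this
  have hBι : IsIntegral R (B.map ι) :=
    hB.map ((IsScalarTower.toAlgHom R K (AlgebraicClosure K)).mapMatrix (m := n))
  rw [AddMonoidHom.map_trace, Matrix.trace_eq_sum_roots_charpoly]
  exact IsIntegral.multiset_sum fun μ hμ => isIntegral_of_mem_spectrum hBι
    (Matrix.mem_spectrum_of_isRoot_charpoly (Polynomial.isRoot_of_mem_roots hμ))

lemma isIntegral_trace_of_isOfFinOrder {B : SL2R} (hB : IsOfFinOrder B) :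
    IsIntegral ℤ B.1.trace := by
  obtain ⟨n, hn, hBn⟩ := isOfFinOrder_iff_pow_eq_one.1 hB
  refine isIntegral_matrix_trace (.of_pow hn ?_)
  rw [← Matrix.SpecialLinearGroup.coe_pow, hBn]
  exact isIntegral_one

end FiniteOrder

section Circle

open Complex

lemma denseRange_pow_circle {ζ : Circle} (hζ : ¬IsOfFinOrder ζ) :
    DenseRange (ζ ^ · : ℕ → Circle) := by
  have : Fact (0 < 2 * Real.pi) := ⟨Real.two_pi_pos⟩
  let e : AddCircle (2 * Real.pi) ≃ₜ Circle := AddCircle.homeomorphCircle Real.two_pi_pos.ne'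
  obtain ⟨θ, rfl⟩ := e.surjective ζ
  have hpow (n : ℕ) : e (n • θ) = e θ ^ n := by
    simp only [e, AddCircle.homeomorphCircle_apply, AddCircle.toCircle_nsmul]
  have hθ : addOrderOf θ = 0 := by
    refine addOrderOf_eq_zero fun h => hζ ?_
    obtain ⟨n, hn, hnθ⟩ := isOfFinAddOrder_iff_nsmul_eq_zero.1 h
    refine isOfFinOrder_iff_pow_eq_one.2 ⟨n, hn, ?_⟩
    rw [← hpow, hnθ, AddCircle.homeomorphCircle_apply, AddCircle.toCircle_zero]
  simp only [← hpow]
  exact e.surjective.denseRange.comp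
    (denseRange_zsmul_iff_nsmul.1 (AddCircle.denseRange_zsmul_iff.2 hθ)) e.continuous

lemma linearMap_complex_apply (ℓ : ℂ →ₗ[ℝ] ℝ) (z : ℂ) : ℓ z = z.re * ℓ 1 + z.im * ℓ I := by
  have hz : z = z.re • (1 : ℂ) + z.im • I := by simp
  conv_lhs => rw [hz, map_add, map_smul, map_smul, smul_eq_mul, smul_eq_mul]

lemma sq_add_sq_le_of_abs_le_on_circle {ℓ : ℂ →ₗ[ℝ] ℝ} {c : ℝ} (hℓ : ∀ z : Circle, |ℓ z| ≤ c) :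
    ℓ 1 ^ 2 + ℓ I ^ 2 ≤ c ^ 2 := by
  obtain ⟨w, hre, him⟩ : ∃ w : ℂ, w.re = ℓ 1 ∧ w.im = ℓ I := ⟨⟨ℓ 1, ℓ I⟩, rfl, rfl⟩
  have hw : ℓ 1 ^ 2 + ℓ I ^ 2 = ‖w‖ ^ 2 := by
    rw [Complex.sq_norm, Complex.normSq_apply, hre, him]; ring
  have hℓw : ℓ w = ‖w‖ ^ 2 := by
    rw [linearMap_complex_apply, ← hw, hre, him]; ring
  have hpolar : ℓ w = ‖w‖ * ℓ (Circle.exp w.arg) := by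
    rw [← smul_eq_mul, ← map_smul, Circle.coe_exp, real_smul, norm_mul_exp_arg_mul_I]
  have hle := (abs_le.1 (hℓ (Circle.exp w.arg))).2
  nlinarith [mul_le_mul_of_nonneg_left hle (norm_nonneg w), sq_nonneg (c - ‖w‖)]

lemma sq_add_sq_le_of_abs_pow_le {ℓ : ℂ →ₗ[ℝ] ℝ} {c : ℝ} {ζ : Circle} (hζ : ¬IsOfFinOrder ζ)
    (hℓ : ∀ n : ℕ, |ℓ ((ζ : ℂ) ^ n)| ≤ c) : ℓ 1 ^ 2 + ℓ I ^ 2 ≤ c ^ 2 := by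
  have hcont : Continuous ℓ := ℓ.continuous_of_finiteDimensional
  refine sq_add_sq_le_of_abs_le_on_circle fun z => (denseRange_pow_circle hζ).induction_on
    (p := fun z : Circle => |ℓ z| ≤ c) z (isClosed_le (by fun_prop) continuous_const) fun n => ?_
  rw [Circle.coe_pow]
  exact hℓ n

lemma exists_algHom_circle_eq {B : Matrix (Fin 2) (Fin 2) ℝ} (hB : B.IsElliptic)
    (hdet : B.det = 1) : ∃ (φ : ℂ →ₐ[ℝ] Matrix (Fin 2) (Fin 2) ℝ) (ζ : Circle),
      φ ζ = B ∧ 2 * (ζ : ℂ).re = B.trace := by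
  have hdiscr : 0 < -B.discr / 4 := by have : B.discr < 0 := hB; linarith
  obtain ⟨s, hs, hs2⟩ : ∃ s : ℝ, s ≠ 0 ∧ s ^ 2 = -B.discr / 4 :=
    ⟨_, (Real.sqrt_pos.2 hdiscr).ne', Real.sq_sqrt hdiscr.le⟩
  set J := s⁻¹ • (B - Matrix.scalar (Fin 2) (B.trace / 2)) with hJ
  have hJJ : J * J = -1 := by
    have hcoeff : s⁻¹ ^ 2 * (B.discr / 4) = -1 := by
      rw [show B.discr / 4 = -s ^ 2 by rw [hs2]; ring]
      field_simp
    rw [hJ, smul_mul_smul_comm, ← sq, ← sq, Matrix.sub_scalar_sq_eq_discr, Matrix.scalar_apply,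
      ← Matrix.smul_one_eq_diagonal, smul_smul, hcoeff, neg_one_smul]
  have hnorm : ‖(⟨B.trace / 2, s⟩ : ℂ)‖ = 1 := by
    rw [← sq_eq_sq₀ (norm_nonneg _) zero_le_one, Complex.sq_norm, Complex.normSq_mk]
    rw [Matrix.discr_fin_two, hdet] at hs2
    linarith
  refine ⟨Complex.lift ⟨J, hJJ⟩, ⟨⟨B.trace / 2, s⟩, mem_sphere_zero_iff_norm.2 hnorm⟩, ?_, ?_⟩
  · change Complex.liftAux J hJJ _ = B
    rw [liftAux_apply, hJ, smul_inv_smul₀ hs]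
    exact add_sub_cancel _ _
  · exact mul_div_cancel₀ _ two_ne_zero

end Circle

section Hyperbolic

lemma isHyperbolic_iff {M : SL2R} : IsHyperbolic M ↔ M.1.IsHyperbolic := by
  rw [IsHyperbolic, Matrix.IsHyperbolic, Matrix.discr_fin_two, M.det_coe, sub_pos,
    ← sq_lt_sq₀ zero_le_two (abs_nonneg _), sq_abs]
  norm_num

lemma isElliptic_iff {M : SL2R} : IsElliptic M ↔ M.1.IsElliptic := by
  rw [IsElliptic, Matrix.IsElliptic, Matrix.discr_fin_two, M.det_coe, sub_neg,
    ← sq_lt_sq₀ (abs_nonneg _) zero_le_two, sq_abs]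
  norm_num

lemma det_lie_nonneg {B C : SL2R} (hB : IsElliptic B) (hfin : ¬IsOfFinOrder B)
    (h : ∀ n : ℕ, ¬IsHyperbolic (B ^ n * C)) : 0 ≤ ⁅B.1, C.1⁆.det := by
  obtain ⟨φ, ζ, hφ, hre⟩ := exists_algHom_circle_eq (isElliptic_iff.1 hB) B.det_coe
  have hζ : ¬IsOfFinOrder ζ := by
    intro hζ
    obtain ⟨n, hn, hζn⟩ := isOfFinOrder_iff_pow_eq_one.1 hζ
    refine hfin (isOfFinOrder_iff_pow_eq_one.2 ⟨n, hn, Subtype.ext ?_⟩)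
    rw [Matrix.SpecialLinearGroup.coe_pow, ← hφ, ← map_pow, ← Circle.coe_pow, hζn, Circle.coe_one,
      map_one, Matrix.SpecialLinearGroup.coe_one]
  let ℓ : ℂ →ₗ[ℝ] ℝ :=
    Matrix.traceLinearMap (Fin 2) ℝ ℝ ∘ₗ LinearMap.mulRight ℝ C.1 ∘ₗ φ.toLinearMap
  have hℓ (z : ℂ) : ℓ z = (φ z * C.1).trace := rfl
  have hsq : ℓ 1 ^ 2 + ℓ Complex.I ^ 2 ≤ 2 ^ 2 := by
    refine sq_add_sq_le_of_abs_pow_le hζ fun n => ?_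
    rw [hℓ, map_pow, hφ]
    exact not_lt.1 (h n)
  have hdet : ⁅B.1, C.1⁆.det = (ζ : ℂ).im ^ 2 * (2 ^ 2 - (ℓ 1 ^ 2 + ℓ Complex.I ^ 2)) := by
    have hBC : (B.1 * C.1).trace = (ζ : ℂ).re * ℓ 1 + (ζ : ℂ).im * ℓ Complex.I := by
      rw [← hφ, ← hℓ, linearMap_complex_apply]
    have hC : C.1.trace = ℓ 1 := by rw [hℓ, map_one, one_mul]
    have hnorm := Complex.normSq_apply ζ ▸ ζ.normSq_coe
    have hlie := four_mul_det_lie B.1 C.1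
    rw [Matrix.discr_fin_two, Matrix.discr_fin_two, B.det_coe, C.det_coe, hBC, hC, ← hre] at hlie
    linear_combination hlie / 4 + (ℓ 1 ^ 2 - 4) * hnorm
  rw [hdet]
  exact mul_nonneg (sq_nonneg _) (sub_nonneg.2 hsq)

lemma det_lie_eq_zero {B C : SL2R} (hB : IsElliptic B) (hfin : ¬IsOfFinOrder B)
    (h : ∀ n : ℕ, ¬IsHyperbolic (B ^ n * C)) : ⁅B.1, C.1⁆.det = 0 :=
  (det_lie_nonpos (isElliptic_iff.1 hB) C.1).antisymm (det_lie_nonneg hB hfin h)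

lemma isElliptic_of_transcendental_trace {M : SL2R} (hM : ¬IsHyperbolic M)
    (htr : Transcendental ℤ M.1.trace) : IsElliptic M := by
  refine (not_lt.1 hM).lt_of_ne fun h => htr ?_
  rcases eq_or_eq_neg_of_abs_eq h with h | h <;> rw [h]
  · exact isAlgebraic_natCast 2
  · exact (isAlgebraic_natCast 2).neg

lemma exists_apply_notMem_of_countable {X Y : Type*} [TopologicalSpace X] [MetricSpace Y]
    {s : Set X} (hs : IsPreconnected s) {f : X → Y} (hf : ContinuousOn f s)
    (hfs : (f '' s).Nontrivial) {t : Set Y} (ht : t.Countable) : ∃ x ∈ s, f x ∉ t := by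
  by_contra! h
  exact hfs.not_subsingleton (ht.isTotallyDisconnected _ (image_subset_iff.2 h) (hs.image f hf))

lemma exists_isElliptic_not_isOfFinOrder {X : Type*} [TopologicalSpace X] {M : X → SL2R}
    {V : Set X} (hV : IsPreconnected V) (hM : ContinuousOn (fun y => (M y).1.trace) V)
    (hnc : ((fun y => (M y).1.trace) '' V).Nontrivial) (hhyp : ∀ y ∈ V, ¬IsHyperbolic (M y)) :
    ∃ y ∈ V, IsElliptic (M y) ∧ ¬IsOfFinOrder (M y) := by
  obtain ⟨y, hy, htr⟩ := exists_apply_notMem_of_countable hV hM hnc (Algebraic.countable ℤ ℝ)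
  exact ⟨y, hy, isElliptic_of_transcendental_trace (hhyp y hy) htr, fun hfin =>
    htr (isIntegral_trace_of_isOfFinOrder hfin).isAlgebraic⟩

end Hyperbolic

lemma wordProd_cons_const {X : Type*} (A : X → ℝ → SL2R) (n : ℕ) (c b : X) (E : ℝ) :
    wordProd A (Fin.cons c (fun _ => b) : Fin (n + 1) → X) E = A b E ^ n * A c E := by
  simp [wordProd, List.ofFn_succ, List.ofFn_const]

section Analytic

variable {X 𝕜 F n : Type*} [NontriviallyNormedField 𝕜] [NormedAddCommGroup X] [NormedSpace 𝕜 X]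
  [NormedAddCommGroup F] [NormedSpace 𝕜 F] [Fintype n] {U : Set X}

lemma nontrivial_image_of_mem_nhds {f : X → F} (hf : AnalyticOnNhd 𝕜 f U) (hU : IsPreconnected U)
    {x y : X} (hx : x ∈ U) (hy : y ∈ U) (hxy : f y ≠ f x) {V : Set X} (hV : V ∈ 𝓝 x) :
    (f '' V).Nontrivial := by
  by_contra hconst
  have heq : ∀ z ∈ V, f z = f x := fun z hz =>
    not_nontrivial_iff.1 hconst (mem_image_of_mem f hz) (mem_image_of_mem f (mem_of_mem_nhds hV))
  exact hxy (hf.eqOn_of_preconnected_of_eventuallyEq analyticOnNhd_const hU hx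
    (Filter.mem_of_superset hV heq) hy)

lemma analyticOnNhd_trace {M : X → Matrix n n 𝕜}
    (hM : ∀ i j, AnalyticOnNhd 𝕜 (fun y => M y i j) U) :
    AnalyticOnNhd 𝕜 (fun y => (M y).trace) U :=
  Finset.analyticOnNhd_fun_sum _ fun i _ => hM i i

lemma analyticOnNhd_det_lie [DecidableEq n] {M : X → Matrix n n 𝕜}
    (hM : ∀ i j, AnalyticOnNhd 𝕜 (fun y => M y i j) U) (B : Matrix n n 𝕜) :
    AnalyticOnNhd 𝕜 (fun y => ⁅B, M y⁆.det) U := by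
  intro y hy
  have hMy (i j) : AnalyticAt 𝕜 (fun y => M y i j) y := hM i j y hy
  simp only [Matrix.det_apply', Ring.lie_def, Matrix.sub_apply, Matrix.mul_apply]
  fun_prop

end Analytic

section RealAnalytic

variable {X : Type*} [NormedAddCommGroup X] [NormedSpace ℝ X] {U : Set X}

theorem exists_isHyperbolic_pow_mul {M : X → SL2R}
    (hM : ∀ i j, AnalyticOnNhd ℝ (fun y => (M y).1 i j) U) (hU : IsPreconnected U) {x y₀ : X}
    (hx : x ∈ U) (hy₀U : y₀ ∈ U) (hy₀ : IsHyperbolic (M y₀)) {V : Set X} (hV : V ∈ 𝓝 x) :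
    ∃ y ∈ V, ∃ z ∈ V, ∃ n : ℕ, IsHyperbolic (M y ^ n * M z) := by
  by_contra! h
  have hhyp (y : X) (hy : y ∈ V) : ¬IsHyperbolic (M y) := by simpa using h y hy y hy 0
  have htr : AnalyticOnNhd ℝ (fun y => (M y).1.trace) U := analyticOnNhd_trace hM
  have hne : (M y₀).1.trace ≠ (M x).1.trace := fun heq =>
    hhyp x (mem_of_mem_nhds hV) (hy₀.trans_eq (congrArg _ heq))
  obtain ⟨r, hr, hball⟩ := Metric.eventually_nhds_iff_ball.1
    (Filter.Eventually.and hV (htr x hx).eventually_analyticAt)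
  obtain ⟨b, hb, hell, hfin⟩ : ∃ b ∈ Metric.ball x r, IsElliptic (M b) ∧ ¬IsOfFinOrder (M b) :=
    exists_isElliptic_not_isOfFinOrder (convex_ball x r).isPreconnected
      (fun y hy => (hball y hy).2.continuousAt.continuousWithinAt)
      (nontrivial_image_of_mem_nhds htr hU hx hy₀U hne (Metric.ball_mem_nhds x hr))
      (fun y hy => hhyp y (hball y hy).1)
  have hdet : ⁅(M b).1, (M y₀).1⁆.det = 0 :=
    (analyticOnNhd_det_lie hM (M b).1).eqOn_zero_of_preconnected_of_eventuallyEq_zero hU hx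
      (Filter.mem_of_superset hV fun z hz => det_lie_eq_zero hell hfin (h b (hball b hb).1 z hz))
      hy₀U
  exact (det_lie_neg (isElliptic_iff.1 hell) (isHyperbolic_iff.1 hy₀)).ne hdet

theorem nonAhyperbolic_word_near_general (A : X → ℝ → SL2R) {E : ℝ}
    (hA : ∀ i j, AnalyticOnNhd ℝ (fun y => (A y E).1 i j) U) (hU : IsPreconnected U) {x y₀ : X}
    (hx : x ∈ U) (hy₀U : y₀ ∈ U) (hy₀ : IsHyperbolic (A y₀ E)) {ε : ℝ} (hε : 0 < ε) :
    ∃ k : ℕ, 0 < k ∧ ∃ y : Fin k → X,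
      (∀ i, ‖y i - x‖ < ε) ∧ IsHyperbolic (wordProd A y E) := by
  obtain ⟨y, hy, z, hz, n, hyz⟩ :=
    exists_isHyperbolic_pow_mul hA hU hx hy₀U hy₀ (Metric.ball_mem_nhds x hε)
  rw [mem_ball_iff_norm] at hy hz
  exact ⟨n + 1, n.succ_pos, Fin.cons z fun _ => y, Fin.cases hz fun _ => hy,
    (wordProd_cons_const A n z y E).symm ▸ hyz⟩

end RealAnalytic

/-- If `X` is a Banach space and `A : X × ℝ → SL(2,ℝ)` is analytic and
non-ahyperbolic with exceptional set `S`, then for every `E ∉ S`, `x ∈ X`,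
and `ε > 0` there is a word `y = y₁⋯y_k` with every letter within `ε` of `x`
such that `A(y,E) = A(y_k,E)⋯A(y₁,E)` is hyperbolic. -/
theorem nonAhyperbolic_word_near {X : Type*}
    [NormedAddCommGroup X] [NormedSpace ℝ X] [CompleteSpace X]
    (A : X → ℝ → SL2R)
    (hA : ∀ i j : Fin 2,
      AnalyticOnNhd ℝ
        (fun p : X × ℝ => (A p.1 p.2 : Matrix (Fin 2) (Fin 2) ℝ) i j) Set.univ)
    (S : Set ℝ) (hNA : NonAhyperbolic A S)
    (E : ℝ) (hE : E ∉ S) (x : X) (ε : ℝ) (hε : 0 < ε) :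
    ∃ k : ℕ, 0 < k ∧ ∃ y : Fin k → X,
      (∀ i, ‖y i - x‖ < ε) ∧ IsHyperbolic (wordProd A y E) := by
  obtain ⟨y₀, hy₀⟩ := hNA.2 E hE
  have hAE (i j : Fin 2) : AnalyticOnNhd ℝ (fun y => (A y E).1 i j) univ := fun y _ =>
    (hA i j (y, E) trivial).comp_of_eq (analyticAt_id.prod analyticAt_const) rfl
  exact nonAhyperbolic_word_near_general A hAE isPreconnected_univ trivial trivial hy₀ hε
end
end

section
/- Assume Y ⊆ ℝ^k is a closed perfect set that is gap-rich with exceptional set S. For any x ∈ per(ℤ,Y) of minimal period p, any ε > 0, and any compact K ⊆ ℝ∖S, there exist constants N₀ = N₀(x,K,ε) ∈ ℕ and c₀ = c₀(x,K,ε) > 0 such that for every N ≥ N₀ there exists y ∈ per(ℤ,Y) of period Np with sup_{j∈ℤ} d(x_j, y_j) < ε and Leb(K ∩ σ(H_y)) ≤ e^{−c₀N}, where Leb denotes Lebesgue measure on ℝ. -/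
/-!
The part of the spectrum in `K` is covered by exponentially small neighbourhoods of the eigenvalues
of finitely many finite matrices.

By gap-richness and compactness of `K` there are finitely many periodic sequences `w 1, …, w m` near
`x` and a common `c > 0` such that every `E ∈ K` satisfies `c ‖u‖² ≤ ‖(H_{w i} - E) u‖²` for some
`i`. The approximant `y` follows each `w i` on a stretch whose length is proportional to `N`, and
equals `x` on the rest of the period.

Fix `E ∈ K` and the corresponding `i`. Let `A r` be the mass of `u` on the `2 r` sites around the
centre of the `i`-th stretch. Testing the lower bound on the restriction of `u` to such a window
gives `c A (r + 1) ≤ 2 (A (r + 2) - A r) + O(‖(H_y - E) u‖²)`, so `A` grows geometrically and an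
approximate solution `u` of `(H_y - E) u = 0` is exponentially small near the centre. Cutting `H_y`
there, once per period, thus changes `(H_y - E) u` only by an exponentially small multiple of `u`.
If `E` is farther than this from the eigenvalues of the matrix of one period, then `H_y - E` is
bounded below, hence invertible by self-adjointness. As the period of the potential is linear in
`N`, the spectrum in `K` lies in `O(N)` intervals of exponentially small length.
-/

open Set MeasureTheory BoundedContinuousFunction

noncomputable section

/-! ### Lower bounds for symmetric operators -/

section Symmetric

variable {𝕜 F : Type*} [RCLike 𝕜] [NormedAddCommGroup F] [InnerProductSpace 𝕜 F] {T : F →ₗ[𝕜] F}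

lemma bijective_iff_exists_antilipschitzWith_of_isSymmetric [CompleteSpace F]
    (hT : T.IsSymmetric) : Function.Bijective T ↔ ∃ C, AntilipschitzWith C T := by
  let T' : F →L[𝕜] F := ⟨T, hT.continuous⟩
  have hiff := T'.bijective_iff_dense_range_and_antilipschitz
  refine ⟨fun h => (hiff.1 h).2, fun ⟨C, hC⟩ => hiff.2 ⟨?_, C, hC⟩⟩
  rw [Submodule.topologicalClosure_eq_top_iff]
  exact hT.orthogonal_range.trans (LinearMap.ker_eq_bot.2 hC.injective)

lemma bijective_iff_exists_mul_norm_sq_le_of_isSymmetric [CompleteSpace F]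
    (hT : T.IsSymmetric) :
    Function.Bijective T ↔ ∃ c : ℝ, 0 < c ∧ ∀ f, c * ‖f‖ ^ 2 ≤ ‖T f‖ ^ 2 := by
  rw [bijective_iff_exists_antilipschitzWith_of_isSymmetric hT]
  constructor
  · rintro ⟨C, hC⟩
    refine ⟨((C : ℝ) ^ 2 + 1)⁻¹, by positivity, fun f => ?_⟩
    have hf : ‖f‖ ^ 2 ≤ (C * ‖T f‖) ^ 2 := by
      gcongr
      exact ZeroHomClass.bound_of_antilipschitz T hC f
    rw [inv_mul_le_iff₀ (by positivity)]
    nlinarith [sq_nonneg ‖T f‖]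
  · rintro ⟨c, hc, h⟩
    refine ⟨Real.toNNReal (√c)⁻¹, AddMonoidHomClass.antilipschitz_of_bound T fun f => ?_⟩
    rw [Real.coe_toNNReal _ (by positivity), le_inv_mul_iff₀ (by positivity)]
    refine le_of_sq_le_sq ?_ (norm_nonneg _)
    rw [mul_pow, Real.sq_sqrt hc.le]
    exact h f

lemma mul_norm_sq_le_norm_apply_sub_smul_sq [FiniteDimensional 𝕜 F] (hT : T.IsSymmetric) {n : ℕ}
    (hn : Module.finrank 𝕜 F = n) {E κ : ℝ} (hκ : ∀ i, κ ≤ (hT.eigenvalues hn i - E) ^ 2) (x : F) :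
    κ * ‖x‖ ^ 2 ≤ ‖T x - (E : 𝕜) • x‖ ^ 2 := by
  let b := hT.eigenvectorBasis hn
  have hcoord (i : Fin n) :
      b.repr (T x - (E : 𝕜) • x) i = ((hT.eigenvalues hn i - E : ℝ) : 𝕜) * b.repr x i := by
    have := hT.eigenvectorBasis_apply_self_apply hn x i
    simp only [map_sub, map_smul, PiLp.sub_apply, PiLp.smul_apply, smul_eq_mul, b,
      this]
    ring
  rw [← b.repr.norm_map x, ← b.repr.norm_map (T x - _), EuclideanSpace.norm_sq_eq,
    EuclideanSpace.norm_sq_eq, Finset.mul_sum]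
  refine Finset.sum_le_sum fun i _ => ?_
  rw [hcoord, norm_mul, mul_pow, RCLike.norm_ofReal, sq_abs]
  gcongr
  exact hκ i

end Symmetric

/-! ### The operator `H_W - E` and its spectral gaps -/

/-- The formal action of `H_W - E` on an arbitrary sequence `u`, which need not be square
summable. -/
def schrodinger (W : ℤ → ℝ) (E : ℝ) (u : ℤ → ℝ) : ℤ → ℝ :=
  fun n => u (n - 1) + u (n + 1) + (W n - E) * u n

/-- The quantitative form `c ‖u‖² ≤ ‖(H_W - E) u‖²` of the statement that `E` is not in the
spectrum of `H_W`, with the `ℓ²` norms written out as sums. -/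
def SpectralGap (W : ℤ → ℝ) (E c : ℝ) : Prop :=
  ∀ u : ℤ → ℝ, Summable (fun n => u n ^ 2) →
    c * ∑' n, u n ^ 2 ≤ ∑' n, schrodinger W E u n ^ 2

lemma memℓp_two_iff_summable_sq {ι : Type*} (u : ι → ℝ) :
    Memℓp (E := fun _ : ι => ℝ) u 2 ↔ Summable (fun n => u n ^ 2) := by
  simp [memℓp_gen_iff (p := 2) (by norm_num)]

lemma ell2_norm_sq (f : Ell2) : ‖f‖ ^ 2 = ∑' n, f n ^ 2 := by
  simpa using lp.norm_rpow_eq_tsum (p := 2) (by norm_num) f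

lemma summable_sq_coe_ell2 (f : Ell2) : Summable (fun n => f n ^ 2) :=
  (memℓp_two_iff_summable_sq f).1 (lp.memℓp f)

lemma summable_mul_of_summable_sq {ι : Type*} {u v : ι → ℝ} (hu : Summable (fun n => u n ^ 2))
    (hv : Summable (fun n => v n ^ 2)) : Summable (fun n => u n * v n) := by
  refine Summable.of_norm_bounded (hu.add hv) fun n => ?_
  rw [Real.norm_eq_abs, abs_mul]
  nlinarith [sq_abs (u n), sq_abs (v n), two_mul_le_add_sq |u n| |v n|, abs_nonneg (u n),
    abs_nonneg (v n)]

lemma summable_schrodinger_sq {W : ℤ → ℝ} (hW : Bornology.IsBounded (range W)) (E : ℝ) {u : ℤ → ℝ}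
    (hu : Summable (fun n => u n ^ 2)) : Summable (fun n => schrodinger W E u n ^ 2) := by
  obtain ⟨B, hB⟩ := isBounded_iff_forall_norm_le.1 hW
  have hpred : Summable (fun n => u (n - 1) ^ 2) := hu.comp_injective (sub_left_injective (b := 1))
  have hsucc : Summable (fun n => u (n + 1) ^ 2) := hu.comp_injective (add_left_injective 1)
  refine Summable.of_nonneg_of_le (fun _ => sq_nonneg _) (fun n => ?_)
    (((hpred.add hsucc).add (hu.mul_left ((B + |E|) ^ 2))).mul_left 3)
  have hdiag : ((W n - E) * u n) ^ 2 ≤ (B + |E|) ^ 2 * u n ^ 2 := by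
    rw [mul_pow, ← sq_abs (W n - E)]
    gcongr
    exact (abs_sub _ _).trans (by gcongr; exact hB _ (mem_range_self n))
  simp only [schrodinger]
  nlinarith [sq_nonneg (u (n - 1) - u (n + 1)), sq_nonneg (u (n - 1) - (W n - E) * u n),
    sq_nonneg (u (n + 1) - (W n - E) * u n)]

/-- `H_W - E` as a linear endomorphism of `ℓ²(ℤ)`, for a bounded potential `W`. -/
def schrodingerLin {W : ℤ → ℝ} (hW : Bornology.IsBounded (range W)) (E : ℝ) : Ell2 →ₗ[ℝ] Ell2 where
  toFun f := ⟨schrodinger W E f,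
    (memℓp_two_iff_summable_sq _).2 (summable_schrodinger_sq hW E (summable_sq_coe_ell2 f))⟩
  map_add' f g := by
    ext n
    simp only [schrodinger, lp.coeFn_add, Pi.add_apply]
    ring
  map_smul' a f := by
    ext n
    simp only [schrodinger, lp.coeFn_smul, Pi.smul_apply, smul_eq_mul, RingHom.id_apply]
    ring

lemma schrodingerLin_isSymmetric {W : ℤ → ℝ} (hW : Bornology.IsBounded (range W)) (E : ℝ) :
    (schrodingerLin hW E).IsSymmetric := by
  intro f g
  have hf := summable_sq_coe_ell2 f
  have hg := summable_sq_coe_ell2 g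
  let A : ℤ → ℝ := fun n => f (n - 1) * g n - f n * g (n - 1)
  have hA : Summable A :=
    (summable_mul_of_summable_sq (u := fun n => f (n - 1)) (v := g)
      (hf.comp_injective (sub_left_injective (b := 1))) hg).sub
    (summable_mul_of_summable_sq (u := f) (v := fun n => g (n - 1)) hf
      (hg.comp_injective (sub_left_injective (b := 1))))
  have hA' : Summable (fun n => A (n + 1)) := hA.comp_injective (add_left_injective 1)
  -- The difference of the two summands is a finite difference of the Wronskian `A`.
  have hdiff (n : ℤ) : g n * schrodinger W E f n - schrodinger W E g n * f n = A n - A (n + 1) := by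
    simp only [schrodinger, A, add_sub_cancel_right]
    ring
  have hsum : ∑' n, g n * schrodinger W E f n - ∑' n, schrodinger W E g n * f n = 0 := by
    rw [← (summable_mul_of_summable_sq hg (summable_schrodinger_sq hW E hf)).tsum_sub
      (summable_mul_of_summable_sq (summable_schrodinger_sq hW E hg) hf), tsum_congr hdiff,
      hA.tsum_sub hA', sub_eq_zero]
    exact ((Equiv.addRight 1).tsum_eq A).symm
  rw [lp.inner_eq_tsum, lp.inner_eq_tsum]
  exact sub_eq_zero.1 hsum

lemma notMem_schrodingerSpectrum_iff {W : ℤ → ℝ} (hW : Bornology.IsBounded (range W)) {E : ℝ} :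
    E ∉ SchrodingerSpectrum W ↔ ∃ c : ℝ, 0 < c ∧ SpectralGap W E c := by
  have hbij : E ∉ SchrodingerSpectrum W ↔ Function.Bijective (schrodingerLin hW E) := by
    simp only [SchrodingerSpectrum, mem_ofPred_eq, not_not]
    refine ⟨fun ⟨T, hT⟩ => ?_, fun h => ⟨LinearEquiv.ofBijective _ h, fun _ _ => rfl⟩⟩
    have hT' : ⇑T = schrodingerLin hW E := by
      ext f n
      exact hT f n
    exact hT' ▸ T.bijective
  rw [hbij, bijective_iff_exists_mul_norm_sq_le_of_isSymmetric (schrodingerLin_isSymmetric hW E)]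
  simp only [ell2_norm_sq]
  refine exists_congr fun c => and_congr_right fun _ => ⟨fun h u hu => ?_, fun h f => ?_⟩
  · exact h ⟨u, (memℓp_two_iff_summable_sq u).2 hu⟩
  · exact h f (summable_sq_coe_ell2 f)

lemma SpectralGap.mono {W : ℤ → ℝ} {E c c' : ℝ} (h : SpectralGap W E c) (hc : c' ≤ c) :
    SpectralGap W E c' := fun u hu =>
  (mul_le_mul_of_nonneg_right hc (tsum_nonneg fun _ => sq_nonneg _)).trans (h u hu)

lemma SpectralGap.of_sq_sub_le {W : ℤ → ℝ} (hW : Bornology.IsBounded (range W)) {E E' c : ℝ}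
    (h : SpectralGap W E c) (hE : (E' - E) ^ 2 ≤ c / 4) : SpectralGap W E' (c / 4) := by
  intro u hu
  have hs := summable_schrodinger_sq hW E hu
  have hs' := summable_schrodinger_sq hW E' hu
  have hpert : ∑' n, schrodinger W E u n ^ 2 ≤
      2 * ∑' n, schrodinger W E' u n ^ 2 + 2 * (E' - E) ^ 2 * ∑' n, u n ^ 2 := by
    rw [← tsum_mul_left, ← tsum_mul_left, ← (hs'.mul_left 2).tsum_add (hu.mul_left _)]
    refine hs.tsum_le_tsum (fun n => ?_) ((hs'.mul_left 2).add (hu.mul_left _))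
    calc schrodinger W E u n ^ 2
        = (schrodinger W E' u n + (E' - E) * u n) ^ 2 := by simp only [schrodinger]; ring
      _ ≤ 2 * (schrodinger W E' u n ^ 2 + ((E' - E) * u n) ^ 2) := add_sq_le
      _ = _ := by ring
  have hu0 : 0 ≤ ∑' n, u n ^ 2 := tsum_nonneg fun _ => sq_nonneg _
  nlinarith [h u hu]

lemma exists_finset_spectralGap {ι : Type*} {W : ι → ℤ → ℝ}
    (hW : ∀ i, Bornology.IsBounded (range (W i))) {K : Set ℝ} (hK : IsCompact K)
    (hgap : ∀ E ∈ K, ∃ i, E ∉ SchrodingerSpectrum (W i)) :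
    ∃ (F : Finset ι) (c : ℝ), 0 < c ∧ ∀ E ∈ K, ∃ i ∈ F, SpectralGap (W i) E c := by
  classical
  refine hK.induction_on (p := fun K' => ∃ (F : Finset ι) (c : ℝ), 0 < c ∧
    ∀ E ∈ K', ∃ i ∈ F, SpectralGap (W i) E c) ⟨∅, 1, one_pos, by simp⟩ ?_ ?_ ?_
  · rintro s t hst ⟨F, c, hc, h⟩
    exact ⟨F, c, hc, fun E hE => h E (hst hE)⟩
  · rintro s t ⟨F, c, hc, hs⟩ ⟨F', c', hc', ht⟩
    refine ⟨F ∪ F', min c c', lt_min hc hc', fun E hE => ?_⟩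
    rcases hE with hE | hE
    · obtain ⟨i, hi, h⟩ := hs E hE
      exact ⟨i, Finset.mem_union_left _ hi, h.mono (min_le_left _ _)⟩
    · obtain ⟨i, hi, h⟩ := ht E hE
      exact ⟨i, Finset.mem_union_right _ hi, h.mono (min_le_right _ _)⟩
  · intro E hE
    obtain ⟨i, hi⟩ := hgap E hE
    obtain ⟨c, hc, h⟩ := (notMem_schrodingerSpectrum_iff (hW i)).1 hi
    have hopen : IsOpen {E' : ℝ | (E' - E) ^ 2 < c / 4} :=
      isOpen_lt (by fun_prop) continuous_const
    exact ⟨_, mem_nhdsWithin_of_mem_nhds (hopen.mem_nhds (by simpa using hc)), {i}, c / 4,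
      by positivity, fun E' hE' => ⟨i, by simp, h.of_sq_sub_le (hW i) (le_of_lt hE')⟩⟩

lemma exists_fin_spectralGap {ι : Type*} {W : ι → ℤ → ℝ}
    (hW : ∀ i, Bornology.IsBounded (range (W i))) {K : Set ℝ} (hK : IsCompact K)
    (hgap : ∀ E ∈ K, ∃ i, E ∉ SchrodingerSpectrum (W i)) :
    ∃ (m : ℕ) (e : Fin m → ι) (c : ℝ), 0 < c ∧ ∀ E ∈ K, ∃ l, SpectralGap (W (e l)) E c := by
  obtain ⟨F, c, hc, h⟩ := exists_finset_spectralGap hW hK hgap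
  refine ⟨F.card, fun l => F.equivFin.symm l, c, hc, fun E hE => ?_⟩
  obtain ⟨i, hi, hiE⟩ := h E hE
  exact ⟨F.equivFin ⟨i, hi⟩, by simpa using hiE⟩

/-! ### Truncation to an interval -/

lemma hasSum_indicator_Ico {M : Type*} [AddCommMonoid M] [TopologicalSpace M] (F : ℤ → M)
    (a b : ℤ) : HasSum ((Ico a b).indicator F) (∑ n ∈ Finset.Ico a b, F n) := by
  rw [← Finset.coe_Ico, ← hasSum_subtype_iff_indicator]
  exact Finset.hasSum _ _

section Truncation

variable (W : ℤ → ℝ) (E : ℝ) (u : ℤ → ℝ) {a b : ℤ}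

lemma schrodinger_indicator_Ico (hab : a < b) (n : ℤ) :
    schrodinger W E ((Ico a b).indicator u) n =
      (Ico a b).indicator (schrodinger W E u) n + (if n = a - 1 then u a else 0) +
        (if n = b then u (b - 1) else 0) - (if n = a then u (a - 1) else 0) -
        (if n = b - 1 then u b else 0) := by
  simp only [schrodinger, Set.indicator_apply, mem_Ico]
  grind

lemma schrodinger_indicator_Ico_sq_le (hab : a + 1 < b) (n : ℤ) :
    schrodinger W E ((Ico a b).indicator u) n ^ 2 ≤
      2 * (Ico a b).indicator (fun n => schrodinger W E u n ^ 2) n +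
        2 * ((if n = a - 1 then u a ^ 2 else 0) + (if n = b then u (b - 1) ^ 2 else 0) +
          (if n = a then u (a - 1) ^ 2 else 0) + (if n = b - 1 then u b ^ 2 else 0)) := by
  rw [schrodinger_indicator_Ico W E u (by omega)]
  simp only [Set.indicator_apply, mem_Ico]
  split_ifs <;> first
    | omega
    | nlinarith [sq_nonneg (schrodinger W E u n + u (a - 1)), sq_nonneg (schrodinger W E u n + u b),
        sq_nonneg (schrodinger W E u n), sq_nonneg (u a), sq_nonneg (u (b - 1))]

lemma sum_schrodinger_indicator_Ico_sq_le (hab : a + 1 < b) :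
    ∑ n ∈ Finset.Ico a b, schrodinger W E ((Ico a b).indicator u) n ^ 2 ≤
      2 * ∑ n ∈ Finset.Ico a b, schrodinger W E u n ^ 2 + 2 * (u (a - 1) ^ 2 + u b ^ 2) := by
  have hmem : a ∈ Finset.Ico a b ∧ b - 1 ∈ Finset.Ico a b ∧ a - 1 ∉ Finset.Ico a b := by
    simp only [Finset.mem_Ico]
    omega
  have hind : ∑ n ∈ Finset.Ico a b, (Ico a b).indicator (fun n => schrodinger W E u n ^ 2) n =
      ∑ n ∈ Finset.Ico a b, schrodinger W E u n ^ 2 :=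
    Finset.sum_congr rfl fun n hn => Set.indicator_of_mem (Finset.coe_Ico a b ▸ hn) _
  refine (Finset.sum_le_sum fun n _ => schrodinger_indicator_Ico_sq_le W E u hab n).trans_eq ?_
  simp only [Finset.sum_add_distrib, ← Finset.mul_sum, hind, Finset.sum_ite_eq', hmem,
    Finset.right_notMem_Ico, if_true, if_false]
  ring

lemma tsum_schrodinger_indicator_Ico_sq_le (hab : a + 1 < b) :
    ∑' n, schrodinger W E ((Ico a b).indicator u) n ^ 2 ≤
      2 * ∑ n ∈ Finset.Ico a b, schrodinger W E u n ^ 2 +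
        2 * (u a ^ 2 + u (b - 1) ^ 2 + u (a - 1) ^ 2 + u b ^ 2) := by
  have hbound := ((hasSum_indicator_Ico (fun n => schrodinger W E u n ^ 2) a b).mul_left 2).add
    (((((hasSum_ite_eq (a - 1) (u a ^ 2)).add (hasSum_ite_eq b (u (b - 1) ^ 2))).add
      (hasSum_ite_eq a (u (a - 1) ^ 2))).add (hasSum_ite_eq (b - 1) (u b ^ 2))).mul_left 2)
  have hle := schrodinger_indicator_Ico_sq_le W E u hab
  exact hasSum_le hle (hbound.summable.of_nonneg_of_le (fun _ => sq_nonneg _) hle).hasSum hbound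

end Truncation

lemma SpectralGap.mul_sum_Ico_sq_le {W : ℤ → ℝ} {E c : ℝ} (h : SpectralGap W E c) (u : ℤ → ℝ)
    {a b : ℤ} (hab : a + 1 < b) :
    c * ∑ n ∈ Finset.Ico a b, u n ^ 2 ≤ 2 * ∑ n ∈ Finset.Ico a b, schrodinger W E u n ^ 2 +
      2 * (u a ^ 2 + u (b - 1) ^ 2 + u (a - 1) ^ 2 + u b ^ 2) := by
  have hu : HasSum (fun n => (Ico a b).indicator u n ^ 2) (∑ n ∈ Finset.Ico a b, u n ^ 2) := by
    rw [show (fun n => (Ico a b).indicator u n ^ 2) = (Ico a b).indicator fun n => u n ^ 2 from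
      (Set.indicator_comp_of_zero (g := fun t : ℝ => t ^ 2) (by simp)).symm]
    exact hasSum_indicator_Ico _ a b
  rw [← hu.tsum_eq]
  exact (h _ hu.summable).trans (tsum_schrodinger_indicator_Ico_sq_le W E u hab)

/-! ### Exponential decay towards a cut -/

/-- The sum of `F` over the `2 * r` sites closest to the cut between `a - 1` and `a`. -/
def windowSum (F : ℤ → ℝ) (a : ℤ) (r : ℕ) : ℝ := ∑ n ∈ Finset.Ico (a - r) (a + r), F n

lemma windowSum_succ (F : ℤ → ℝ) (a : ℤ) (r : ℕ) :
    windowSum F a (r + 1) = F (a - (r + 1)) + windowSum F a r + F (a + r) := by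
  rw [windowSum, windowSum, Nat.cast_succ, ← add_assoc, ← sub_sub,
    ← Finset.sum_Ico_add_eq_sum_Ico_add_one (by omega),
    ← Finset.insert_Ico_left_eq_Ico_sub_one (by omega), Finset.sum_insert (by simp)]

lemma windowSum_one (F : ℤ → ℝ) (a : ℤ) : windowSum F a 1 = F (a - 1) + F a := by
  simpa [windowSum] using windowSum_succ F a 0

lemma windowSum_mono {F : ℤ → ℝ} (hF : ∀ n, 0 ≤ F n) (a : ℤ) : Monotone (windowSum F a) :=
  fun _ _ h => Finset.sum_le_sum_of_subset_of_nonneg (Finset.Ico_subset_Ico (by omega) (by omega))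
    fun n _ _ => hF n

section Decay

variable {W : ℤ → ℝ} {E c : ℝ} (h : SpectralGap W E c) (a : ℤ) (u : ℤ → ℝ)
include h

lemma SpectralGap.mul_windowSum_sq_le (r : ℕ) :
    c * windowSum (fun n => u n ^ 2) a (r + 1) ≤
      2 * windowSum (fun n => schrodinger W E u n ^ 2) a (r + 1) +
        2 * (windowSum (fun n => u n ^ 2) a (r + 2) - windowSum (fun n => u n ^ 2) a r) := by
  have hstep := h.mul_sum_Ico_sq_le u (a := a - (r + 1 : ℕ)) (b := a + (r + 1 : ℕ)) (by omega)
  have hsucc := windowSum_succ (fun n => u n ^ 2) a r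
  have hsucc' := windowSum_succ (fun n => u n ^ 2) a (r + 1)
  simp only [Nat.cast_succ, sub_sub, ← add_assoc, add_sub_cancel_right] at hstep hsucc hsucc'
  simp only [windowSum, Nat.cast_succ, ← add_assoc] at *
  linarith

lemma SpectralGap.windowSum_one_sq_le (hc : 0 ≤ c) (t : ℕ) :
    windowSum (fun n => u n ^ 2) a 1 ≤
      (1 + c / 2)⁻¹ ^ t * windowSum (fun n => u n ^ 2) a (2 * t + 1) +
        t * windowSum (fun n => schrodinger W E u n ^ 2) a (2 * t + 1) := by
  set M := windowSum (fun n => u n ^ 2) a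
  set G := windowSum (fun n => schrodinger W E u n ^ 2) a with hG
  set θ : ℝ := (1 + c / 2)⁻¹ with hθ
  have hMmono : Monotone M := windowSum_mono (fun _ => sq_nonneg _) a
  have hGmono : Monotone G := windowSum_mono (fun _ => sq_nonneg _) a
  have hθ0 : 0 ≤ θ := by positivity
  have hθ1 : θ ≤ 1 := inv_le_one_of_one_le₀ (by linarith)
  have hstep (r : ℕ) : M r ≤ θ * (M (r + 2) + G (r + 2)) := by
    rw [hθ, le_inv_mul_iff₀ (by positivity)]
    nlinarith [h.mul_windowSum_sq_le a u r, hMmono r.le_succ, hGmono (r + 1).le_succ]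
  induction t with
  | zero => simp
  | succ t ih =>
    have hG0 : 0 ≤ G (2 * t + 3) := by
      simpa [hG, windowSum] using hGmono (2 * t + 3).zero_le
    calc M 1 ≤ θ ^ t * M (2 * t + 1) + t * G (2 * t + 1) := ih
      _ ≤ θ ^ t * (θ * (M (2 * t + 3) + G (2 * t + 3))) + t * G (2 * t + 3) := by
        gcongr
        · exact hstep _
        · exact hGmono (by omega)
      _ = θ ^ (t + 1) * M (2 * t + 3) + θ ^ (t + 1) * G (2 * t + 3) + t * G (2 * t + 3) := by ring
      _ ≤ θ ^ (t + 1) * M (2 * t + 3) + 1 * G (2 * t + 3) + t * G (2 * t + 3) := by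
        gcongr
        exact pow_le_one₀ hθ0 hθ1
      _ = _ := by push_cast; ring_nf

end Decay

/-! ### Dirichlet restrictions -/

/-- The restriction of `H_V` to a finite set `s` of sites, with Dirichlet conditions outside `s`. -/
def dirichletMatrix (V : ℤ → ℝ) (s : Finset ℤ) : Matrix s s ℝ := fun i j =>
  (if (j : ℤ) = i - 1 then 1 else 0) + (if (j : ℤ) = i + 1 then 1 else 0) +
    (if (j : ℤ) = i then V i else 0)

lemma dirichletMatrix_mulVec (V : ℤ → ℝ) (s : Finset ℤ) (u : ℤ → ℝ) (i : s) :
    (dirichletMatrix V s).mulVec (fun j => u j) i =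
      schrodinger V 0 ((s : Set ℤ).indicator u) i := by
  simp only [Matrix.mulVec, dotProduct, dirichletMatrix, add_mul, ite_mul, one_mul, zero_mul,
    Finset.sum_add_distrib, schrodinger, Set.indicator_apply, Finset.mem_coe, sub_zero]
  rw [Finset.sum_coe_sort s (fun j => if j = (i : ℤ) - 1 then u j else 0),
    Finset.sum_coe_sort s (fun j => if j = (i : ℤ) + 1 then u j else 0),
    Finset.sum_coe_sort s (fun j => if j = (i : ℤ) then V i * u j else 0)]
  simp only [Finset.sum_ite_eq', i.2, if_true]

lemma dirichletMatrix_isSymmetric (V : ℤ → ℝ) (s : Finset ℤ) :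
    (dirichletMatrix V s).toEuclideanLin.IsSymmetric := by
  rw [Matrix.isSymmetric_toEuclideanLin_iff]
  ext i j
  simp only [Matrix.conjTranspose_apply, dirichletMatrix, star_trivial]
  grind

/-- The eigenvalues of the Dirichlet restriction of `H_V` to `s`, with multiplicity. -/
def dirichletEigenvalues (V : ℤ → ℝ) (s : Finset ℤ) : Fin s.card → ℝ :=
  (dirichletMatrix_isSymmetric V s).eigenvalues
    (finrank_euclideanSpace.trans (Fintype.card_coe s))

lemma mul_sum_sq_le_sum_schrodinger_indicator_sq {V : ℤ → ℝ} {s : Finset ℤ} {E κ : ℝ}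
    (hκ : ∀ i, κ ≤ (dirichletEigenvalues V s i - E) ^ 2) (u : ℤ → ℝ) :
    κ * ∑ n ∈ s, u n ^ 2 ≤ ∑ n ∈ s, schrodinger V E ((s : Set ℤ).indicator u) n ^ 2 := by
  have hmul (i : s) : (dirichletMatrix V s).mulVec (fun j => u j) i - E * u i =
      schrodinger V E ((s : Set ℤ).indicator u) i := by
    rw [dirichletMatrix_mulVec]
    simp only [schrodinger, Set.indicator_of_mem (Finset.mem_coe.2 i.2)]
    ring
  have hle := mul_norm_sq_le_norm_apply_sub_smul_sq (dirichletMatrix_isSymmetric V s) _ hκ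
    (WithLp.toLp 2 fun j => u j)
  simp only [EuclideanSpace.norm_sq_eq, Matrix.toLpLin_apply, PiLp.sub_apply, PiLp.smul_apply,
    Real.norm_eq_abs, sq_abs, smul_eq_mul, RCLike.ofReal_real_eq_id, id, hmul] at hle
  rwa [Finset.sum_coe_sort s (fun n => u n ^ 2),
    Finset.sum_coe_sort s (fun n => schrodinger V E ((s : Set ℤ).indicator u) n ^ 2)] at hle

lemma mul_sum_Ico_sq_le_of_dirichletEigenvalues {V : ℤ → ℝ} {a b : ℤ} {E κ : ℝ} (hab : a + 1 < b)
    (hκ : ∀ i, κ ≤ (dirichletEigenvalues V (Finset.Ico a b) i - E) ^ 2) (u : ℤ → ℝ) :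
    κ * ∑ n ∈ Finset.Ico a b, u n ^ 2 ≤
      2 * ∑ n ∈ Finset.Ico a b, schrodinger V E u n ^ 2 + 2 * (u (a - 1) ^ 2 + u b ^ 2) := by
  refine (mul_sum_sq_le_sum_schrodinger_indicator_sq hκ u).trans ?_
  simpa only [Finset.coe_Ico] using sum_schrodinger_indicator_Ico_sq_le V E u hab

/-! ### Periodic potentials -/

/-- The sum of `F` over the translate by `j * q` of the cell of `q` sites starting at `b`. -/
def cellSum {M : Type*} [AddCommMonoid M] (F : ℤ → M) (b : ℤ) (q : ℕ) (j : ℤ) : M :=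
  ∑ n ∈ Finset.Ico b (b + q), F (n + j * q)

lemma hasSum_cellSum {M : Type*} [AddCommMonoid M] [TopologicalSpace M] [ContinuousAdd M]
    [RegularSpace M] {F : ℤ → M} {S : M} (hF : HasSum F S) {q : ℕ} (hq : 0 < q) (b : ℤ) :
    HasSum (cellSum F b q) S := by
  have : NeZero q := ⟨hq.ne'⟩
  let e : ℤ × Fin q ≃ ℤ := (Int.divModEquiv q).symm.trans (Equiv.addLeft b)
  have hFe : HasSum (F ∘ e) S := e.hasSum_iff.2 hF
  refine (hFe.prod_fiberwise fun j => hasSum_fintype _).congr_fun fun j => ?_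
  have hcell : cellSum F b q j = ∑ i : Fin q, F (b + i + j * q) := by
    rw [cellSum, Fin.sum_univ_eq_sum_range (fun i => F (b + i + j * q))]
    refine Finset.sum_nbij' (fun n => (n - b).toNat) (fun i => b + i) ?_ ?_ ?_ ?_ ?_ <;> grind
  rw [hcell]
  refine Finset.sum_congr rfl fun i _ => congrArg F ?_
  simp only [e, Int.divModEquiv, Equiv.trans_apply, Equiv.coe_fn_symm_mk, Equiv.coe_addLeft]
  ring

lemma isBounded_range_of_periodic {α : Type*} [PseudoMetricSpace α] {f : ℤ → α} {q : ℤ}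
    (hf : Function.Periodic f q) (hq : 0 < q) : Bornology.IsBounded (range f) := by
  rw [← hf.image_Ioc hq 0]
  exact ((finite_Ioc _ _).image f).isBounded

lemma schrodinger_comp_add_right {V : ℤ → ℝ} {s : ℤ} (hV : Function.Periodic V s) (E : ℝ)
    (u : ℤ → ℝ) (n : ℤ) : schrodinger V E (fun n => u (n + s)) n = schrodinger V E u (n + s) := by
  simp only [schrodinger, hV n, sub_add_eq_add_sub, add_right_comm]

section Periodic

variable {V : ℤ → ℝ} {q : ℕ} (hV : Function.Periodic V q) {E : ℝ} {a : ℤ}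
include hV

lemma schrodinger_comp_add_int_mul (u : ℤ → ℝ) (j n : ℤ) :
    schrodinger V E (fun n => u (n + j * q)) n = schrodinger V E u (n + j * q) :=
  schrodinger_comp_add_right (by simpa using hV.int_mul j) E u n

lemma mul_cellSum_sq_le_of_dirichletEigenvalues (hq : 1 < q) {κ : ℝ}
    (hκ : ∀ i, κ ≤ (dirichletEigenvalues V (Finset.Ico a (a + q)) i - E) ^ 2) (u : ℤ → ℝ) (j : ℤ) :
    κ * cellSum (fun n => u n ^ 2) a q j ≤ 2 * cellSum (fun n => schrodinger V E u n ^ 2) a q j +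
      2 * (u (a - 1 + j * q) ^ 2 + u (a + (j + 1) * q) ^ 2) := by
  have hcell := mul_sum_Ico_sq_le_of_dirichletEigenvalues (by omega) hκ fun n => u (n + j * q)
  simp only [schrodinger_comp_add_int_mul hV] at hcell
  rwa [show a + (q : ℤ) + j * q = a + (j + 1) * q by ring] at hcell

variable {W : ℤ → ℝ} {c : ℝ} {t : ℕ}

lemma SpectralGap.cut_sq_le (h : SpectralGap W E c) (hc : 0 ≤ c) (htq : 2 * (2 * t + 1) ≤ q)
    (hVW : EqOn V W (Ico (a - (2 * t + 1)) (a + (2 * t + 1)))) (u : ℤ → ℝ) (j : ℤ) :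
    u (a - 1 + j * q) ^ 2 + u (a + j * q) ^ 2 ≤
      (1 + c / 2)⁻¹ ^ t * cellSum (fun n => u n ^ 2) (a - (2 * t + 1)) q j +
      t * cellSum (fun n => schrodinger V E u n ^ 2) (a - (2 * t + 1)) q j := by
  let v : ℤ → ℝ := fun n => u (n + j * q)
  have hwindow {F : ℤ → ℝ} (hF : ∀ n, 0 ≤ F n) :
      windowSum (fun n => F (n + j * q)) a (2 * t + 1) ≤ cellSum F (a - (2 * t + 1)) q j :=
    Finset.sum_le_sum_of_subset_of_nonneg (Finset.Ico_subset_Ico (by simp) (by push_cast; omega))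
      fun n _ _ => hF _
  have hW : windowSum (fun n => schrodinger W E v n ^ 2) a (2 * t + 1) =
      windowSum (fun n => schrodinger V E u (n + j * q) ^ 2) a (2 * t + 1) := by
    refine Finset.sum_congr rfl fun n hn => ?_
    have hn' : n ∈ Ico (a - (2 * t + 1)) (a + (2 * t + 1)) := by simpa using hn
    beta_reduce
    rw [← schrodinger_comp_add_int_mul hV, schrodinger, schrodinger, hVW hn']
  calc u (a - 1 + j * q) ^ 2 + u (a + j * q) ^ 2
      = windowSum (fun n => v n ^ 2) a 1 := (windowSum_one (fun n => v n ^ 2) a).symm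
    _ ≤ _ := h.windowSum_one_sq_le a v hc t
    _ ≤ _ := by
      rw [hW]
      gcongr
      · exact hwindow fun n => sq_nonneg (u n)
      · exact hwindow fun n => sq_nonneg (schrodinger V E u n)

lemma SpectralGap.of_eqOn_window (h : SpectralGap W E c) (hc : 0 ≤ c) (htq : 2 * (2 * t + 1) ≤ q)
    (hVW : EqOn V W (Ico (a - (2 * t + 1)) (a + (2 * t + 1)))) {κ : ℝ}
    (hκ : ∀ i, κ ≤ (dirichletEigenvalues V (Finset.Ico a (a + q)) i - E) ^ 2) :
    SpectralGap V E ((κ - 4 * (1 + c / 2)⁻¹ ^ t) / (2 + 4 * t)) := by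
  intro u hu
  have hq : 0 < q := by omega
  have hg := summable_schrodinger_sq (isBounded_range_of_periodic hV (by exact_mod_cast hq)) E hu
  have hmass := hasSum_cellSum hu.hasSum hq
  have herror := hasSum_cellSum hg.hasSum hq
  have hcutsum := ((hmass (a - (2 * t + 1))).mul_left ((1 + c / 2)⁻¹ ^ t)).add
    ((herror (a - (2 * t + 1))).mul_left (t : ℝ))
  have hsum := hasSum_le (fun j => ?_) ((hmass a).mul_left κ)
    (((herror a).mul_left 2).add
      ((hcutsum.add ((Equiv.addRight 1).hasSum_iff.2 hcutsum)).mul_left 2))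
  · rw [div_mul_eq_mul_div, div_le_iff₀ (by positivity)]
    linarith
  · have hcut := h.cut_sq_le hV hc htq hVW u
    have hcell := mul_cellSum_sq_le_of_dirichletEigenvalues hV (by omega) hκ u j
    simp only [Function.comp_apply, Equiv.coe_addRight]
    linarith [hcut j, hcut (j + 1), sq_nonneg (u (a + j * q)),
      sq_nonneg (u (a - 1 + (j + 1) * q))]

lemma SpectralGap.exists_abs_dirichletEigenvalues_sub_lt (h : SpectralGap W E c) (hc : 0 ≤ c)
    (htq : 2 * (2 * t + 1) ≤ q) (hVW : EqOn V W (Ico (a - (2 * t + 1)) (a + (2 * t + 1)))) {r : ℝ}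
    (hr : 0 ≤ r) (hcr : 4 * (1 + c / 2)⁻¹ ^ t < r ^ 2) (hE : E ∈ SchrodingerSpectrum V) :
    ∃ i, |dirichletEigenvalues V (Finset.Ico a (a + q)) i - E| < r := by
  have hVb := isBounded_range_of_periodic hV (by omega)
  by_contra! hfar
  refine (notMem_schrodingerSpectrum_iff hVb).2
    ⟨_, div_pos (sub_pos.2 hcr) (by positivity),
      h.of_eqOn_window hV hc htq hVW (κ := r ^ 2) fun i => ?_⟩ hE
  · rw [← sq_abs (_ - E)]
    gcongr
    exact hfar i

lemma volume_inter_schrodingerSpectrum_le {ι : Type*} [Fintype ι] {W : ι → ℤ → ℝ} {K : Set ℝ}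
    (hc : 0 ≤ c) (hgap : ∀ E ∈ K, ∃ i, SpectralGap (W i) E c) (htq : 2 * (2 * t + 1) ≤ q)
    (a : ι → ℤ) (hVW : ∀ i, EqOn V (W i) (Ico (a i - (2 * t + 1)) (a i + (2 * t + 1)))) {r : ℝ}
    (hr : 0 ≤ r) (hcr : 4 * (1 + c / 2)⁻¹ ^ t < r ^ 2) :
    volume (K ∩ SchrodingerSpectrum V) ≤ ENNReal.ofReal (Fintype.card ι * q * (2 * r)) := by
  have hcover : K ∩ SchrodingerSpectrum V ⊆
      ⋃ i, ⋃ l, Metric.ball (dirichletEigenvalues V (Finset.Ico (a i) (a i + q)) l) r := by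
    rintro E ⟨hEK, hE⟩
    obtain ⟨i, hi⟩ := hgap E hEK
    obtain ⟨l, hl⟩ :=
      hi.exists_abs_dirichletEigenvalues_sub_lt hV hc htq (hVW i) hr hcr hE
    exact mem_iUnion₂.2 ⟨i, l, by rwa [Metric.mem_ball', Real.dist_eq]⟩
  calc volume (K ∩ SchrodingerSpectrum V)
      ≤ ∑ i, ∑ l, volume (Metric.ball (dirichletEigenvalues V (Finset.Ico (a i) (a i + q)) l) r) :=
        (measure_mono hcover).trans <| (measure_iUnion_fintype_le _ _).trans <|
          Finset.sum_le_sum fun _ _ => measure_iUnion_fintype_le _ _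
    _ = ENNReal.ofReal (Fintype.card ι * q * (2 * r)) := by
      simp [Real.volume_ball, ENNReal.ofReal_mul, mul_assoc]

end Periodic

/-! ### Periodic block sequences -/

lemma agg_congr {k : ℕ} (hk : 0 < k) {z z' : ℤ → (Fin k → ℝ)} {n n' : ℤ}
    (hdiv : z (n / k) = z' (n' / k)) (hmod : n % k = n' % k) : agg k z n = agg k z' n' := by
  simp only [agg, dif_pos hk, Int.fdiv_eq_ediv_of_nonneg _ (Int.natCast_nonneg k), hdiv, hmod]

lemma agg_eqOn_of_eqOn {k : ℕ} (hk : 0 < k) {z z' : ℤ → (Fin k → ℝ)} {i j : ℤ}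
    (h : EqOn z z' (Ico i j)) : EqOn (agg k z) (agg k z') (Ico (i * k) (j * k)) := by
  rintro n ⟨hn, hn'⟩
  have hk' : (0 : ℤ) < k := by exact_mod_cast hk
  exact agg_congr hk
    (h ⟨(Int.le_ediv_iff_mul_le hk').2 hn, (Int.ediv_lt_iff_lt_mul hk').2 hn'⟩) rfl

lemma agg_periodic {k : ℕ} (hk : 0 < k) {z : ℤ → (Fin k → ℝ)} {P : ℕ}
    (hz : Function.Periodic z P) : Function.Periodic (agg k z) ((P * k : ℕ) : ℤ) := by
  intro n
  rw [Nat.cast_mul]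
  refine agg_congr hk ?_ (Int.add_mul_emod_self_right _ _ _)
  rw [Int.add_mul_ediv_right _ _ (by exact_mod_cast hk.ne'), hz]

lemma isBounded_range_agg {k : ℕ} {z : ℤ → (Fin k → ℝ)} (hz : Bornology.IsBounded (range z)) :
    Bornology.IsBounded (range (agg k z)) := by
  obtain ⟨B, hB⟩ := isBounded_iff_forall_norm_le.1 hz
  refine isBounded_iff_forall_norm_le.2 ⟨B, forall_mem_range.2 fun n => ?_⟩
  have hzB (j : ℤ) : ‖z j‖ ≤ B := hB _ (mem_range_self j)
  unfold agg
  split_ifs with hk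
  · exact (norm_le_pi_norm _ _).trans (hzB _)
  · simpa using (norm_nonneg _).trans (hzB 0)

lemma isBounded_range_of_dist_lt {ι α : Type*} [PseudoMetricSpace α] {x z : ι → α}
    (hx : Bornology.IsBounded (range x)) {ε : ℝ} (hz : ∀ j, dist (x j) (z j) < ε) :
    Bornology.IsBounded (range z) := by
  refine (hx.thickening (δ := ε)).subset (range_subset_iff.2 fun j => ?_)
  exact Metric.mem_thickening_iff.2 ⟨x j, mem_range_self j, dist_comm (x j) (z j) ▸ hz j⟩

lemma apply_emod_of_periodic {α : Type*} {x : ℤ → α} {p : ℕ} (hper : Function.Periodic x p)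
    (j : ℤ) : x (j % p) = x j := by
  have h := hper.int_mul (j / p) (j % p)
  rwa [Int.cast_id, Int.emod_add_ediv_mul, eq_comm] at h

lemma perExt_mem {α : Type*} [Zero α] {l : ℕ} (hl : 0 < l) {Y : Set α} {y : Fin l → α}
    (hy : ∀ i, y i ∈ Y) (n : ℤ) : perExt y n ∈ Y := by
  simp only [perExt, dif_pos hl, hy]

lemma perExt_restrict_of_periodic {α : Type*} [Zero α] {p : ℕ} (hp : 0 < p) {x : ℤ → α}
    (hper : Function.Periodic x p) (j : ℤ) : perExt (fun i : Fin p => x i) j = x j := by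
  simp only [perExt, dif_pos hp]
  rw [Int.toNat_of_nonneg (Int.emod_nonneg _ (by omega)), apply_emod_of_periodic hper]

lemma GapRich.exists_dist_lt_notMem_schrodingerSpectrum {k : ℕ} {Y : Set (Fin k → ℝ)} {S : Set ℝ}
    (hGR : GapRich k Y S) {x : ℤ → (Fin k → ℝ)} (hxY : ∀ j, x j ∈ Y) {p : ℕ} (hp : 0 < p)
    (hper : Function.Periodic x p) {ε : ℝ} (hε : 0 < ε) {E : ℝ} (hE : E ∉ S) :
    ∃ z : ℤ → (Fin k → ℝ), (∀ j, z j ∈ Y) ∧ (∀ j, dist (x j) (z j) < ε) ∧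
      E ∉ SchrodingerSpectrum (agg k z) := by
  obtain ⟨l, hl, y, hyY, hxy, hEy⟩ := hGR.2 E hE p hp (fun i => x i) (fun i => hxY i) ε hε
  simp only [perExt_restrict_of_periodic hp hper] at hxy
  exact ⟨perExt y, perExt_mem hl hyY, hxy, hEy⟩

/-- The `P`-periodic sequence that on `[0, P)` follows `w 0`, `w 1`, … in turn, each for `M` sites,
and then follows `x`. No sequence is shifted: at `j ∈ [0, P)` the value is `w i j` or `x j`. -/
def splice {α : Type*} {m : ℕ} (w : Fin m → ℤ → α) (x : ℤ → α) (P M : ℕ) : ℤ → α := fun j =>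
  if h : (j % P).toNat / M < m then w ⟨(j % P).toNat / M, h⟩ (j % P) else x (j % P)

section Splice

variable {α : Type*} {m : ℕ} {w : Fin m → ℤ → α} {x : ℤ → α} {P M : ℕ}

lemma splice_periodic : Function.Periodic (splice w x P M) P := fun j => by
  simp only [splice, Int.add_emod_right]

lemma splice_induction {motive : ℤ → α → Prop} (hw : ∀ i j, motive j (w i j))
    (hx : ∀ j, motive j (x j)) (j : ℤ) : motive (j % P) (splice w x P M j) := by
  unfold splice
  split_ifs
  · exact hw _ _
  · exact hx _

lemma splice_eqOn_block (hP : m * M ≤ P) (i : Fin m) :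
    EqOn (splice w x P M) (w i) (Ico (i * M) ((i + 1) * M)) := by
  rintro j ⟨hj, hj'⟩
  have hiP : ((i : ℤ) + 1) * M ≤ P := by
    exact_mod_cast (Nat.mul_le_mul_right M i.2).trans hP
  have hj0 : 0 ≤ j := le_trans (by positivity) hj
  have hmod : j % (P : ℤ) = j := Int.emod_eq_of_lt hj0 (hj'.trans_le hiP)
  lift j to ℕ using hj0
  have hdiv : j / M = i := Nat.div_eq_of_lt_le (by exact_mod_cast hj) (by exact_mod_cast hj')
  simp only [splice, hmod, Int.toNat_natCast, hdiv, i.2, dif_pos]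

end Splice

lemma volume_inter_schrodingerSpectrum_agg_splice_le {k : ℕ} (hk : 0 < k) {m : ℕ}
    {w : Fin m → ℤ → (Fin k → ℝ)} {x : ℤ → (Fin k → ℝ)} {P t : ℕ} (hP : m * (4 * t + 2) ≤ P)
    {K : Set ℝ} {c : ℝ} (hc : 0 ≤ c) (hgap : ∀ E ∈ K, ∃ i, SpectralGap (agg k (w i)) E c) {r : ℝ}
    (hr : 0 ≤ r) (hcr : 4 * (1 + c / 2)⁻¹ ^ t < r ^ 2) :
    volume (K ∩ SchrodingerSpectrum (agg k (splice w x P (4 * t + 2)))) ≤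
      ENNReal.ofReal (m * (P * k : ℕ) * (2 * r)) := by
  rcases K.eq_empty_or_nonempty with rfl | ⟨E₀, hE₀⟩
  · simp
  obtain ⟨i₀, -⟩ := hgap E₀ hE₀
  have htq : 2 * (2 * t + 1) ≤ P * k := by
    nlinarith [Nat.le_mul_of_pos_left (4 * t + 2) i₀.pos, Nat.le_mul_of_pos_right P hk]
  have hwindow (i : Fin m) : EqOn (agg k (splice w x P (4 * t + 2))) (agg k (w i))
      (Ico ((i * (4 * t + 2) * k + (2 * t + 1) : ℤ) - (2 * t + 1))
        ((i * (4 * t + 2) * k + (2 * t + 1) : ℤ) + (2 * t + 1))) := by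
    refine (agg_eqOn_of_eqOn hk (splice_eqOn_block hP i)).mono (Ico_subset_Ico ?_ ?_)
    · push_cast
      linarith
    · push_cast
      nlinarith [show (1 : ℤ) ≤ k by exact_mod_cast hk]
  simpa using volume_inter_schrodingerSpectrum_le (agg_periodic hk splice_periodic) hc hgap htq _
    hwindow hr hcr

/-! ### Thin spectra -/

lemma exists_mul_pow_div_le_exp {C s : ℝ} (hC : 0 ≤ C) (hs0 : 0 < s) (hs1 : s < 1) {d : ℕ}
    (hd : 0 < d) : ∃ N₀ : ℕ, ∃ c₀ : ℝ, 0 < c₀ ∧ ∀ N : ℕ, N₀ ≤ N →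
      C * N * s ^ (N / d) ≤ Real.exp (-(c₀ * N)) := by
  have hr0 : 0 < √s := Real.sqrt_pos.2 hs0
  have hr1 : √s < 1 := by rwa [Real.sqrt_lt' one_pos, one_pow]
  have hlog : 0 < -Real.log √s := neg_pos.2 (Real.log_neg hr0 hr1)
  have hlim := (tendsto_self_mul_const_pow_of_lt_one hr0.le hr1).const_mul (C * (2 * d))
  rw [mul_zero] at hlim
  obtain ⟨t₀, ht₀⟩ := Filter.eventually_atTop.1 (hlim.eventually (gt_mem_nhds one_pos))
  refine ⟨d * (t₀ + 1), -Real.log √s / (2 * d), by positivity, fun N hN => ?_⟩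
  have htN : t₀ + 1 ≤ N / d := (Nat.le_div_iff_mul_le hd).2 (by rwa [mul_comm])
  have hNt : N ≤ 2 * d * (N / d) := by nlinarith [Nat.lt_div_mul_add hd (a := N)]
  set t := N / d
  have hNt' : (N : ℝ) ≤ 2 * d * t := by exact_mod_cast hNt
  -- One factor `√s ^ t` of `s ^ t` absorbs `C * N`, the other gives the exponential.
  calc C * N * s ^ t ≤ C * (2 * d * t) * s ^ t := by gcongr
    _ = (C * (2 * d) * (t * √s ^ t)) * √s ^ t := by
      nth_rw 1 [← Real.mul_self_sqrt hs0.le]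
      ring
    _ ≤ 1 * √s ^ t := by
      gcongr
      exact (ht₀ t (by omega)).le
    _ = Real.exp (t * Real.log √s) := by rw [one_mul, Real.exp_nat_mul, Real.exp_log hr0]
    _ ≤ Real.exp (-(-Real.log √s / (2 * d) * N)) := by
      rw [Real.exp_le_exp, le_neg, ← mul_neg, div_mul_eq_mul_div, div_le_iff₀ (by positivity)]
      nlinarith

lemma exists_periodic_volume_le_of_spectralGap {k : ℕ} (hk : 0 < k) {Y : Set (Fin k → ℝ)}
    {x : ℤ → (Fin k → ℝ)} (hxY : ∀ j, x j ∈ Y) {P : ℕ} (hper : Function.Periodic x P) {ε : ℝ}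
    (hε : 0 < ε) {m : ℕ} {w : Fin m → ℤ → (Fin k → ℝ)}
    (hw : ∀ i j, w i j ∈ Y ∧ dist (x j) (w i j) < ε) {K : Set ℝ} {c : ℝ} (hc : 0 ≤ c)
    (hgap : ∀ E ∈ K, ∃ i, SpectralGap (agg k (w i)) E c) {t : ℕ} (hP : m * (4 * t + 2) ≤ P) :
    ∃ y : ℤ → (Fin k → ℝ), (∀ j, y j ∈ Y) ∧ Function.Periodic y P ∧ (∀ j, dist (x j) (y j) < ε) ∧
      volume (K ∩ SchrodingerSpectrum (agg k y)) ≤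
        ENNReal.ofReal (6 * m * P * k * √(1 + c / 2)⁻¹ ^ t) := by
  set θ : ℝ := (1 + c / 2)⁻¹
  have hθ : 0 < θ := by positivity
  have hsq : (3 * √θ ^ t) ^ 2 = 9 * θ ^ t := by
    rw [mul_pow, pow_right_comm, Real.sq_sqrt hθ.le]
    norm_num
  have hy := splice_induction (P := P) (M := 4 * t + 2)
    (motive := fun j z => z ∈ Y ∧ dist (x j) z < ε) hw fun j => ⟨hxY j, by rwa [dist_self]⟩
  simp only [apply_emod_of_periodic hper] at hy
  refine ⟨splice w x P (4 * t + 2), fun j => (hy j).1, splice_periodic, fun j => (hy j).2, ?_⟩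
  refine (volume_inter_schrodingerSpectrum_agg_splice_le hk hP hc hgap (r := 3 * √θ ^ t)
    (by positivity) ?_).trans_eq ?_
  · rw [hsq]
    gcongr
    norm_num
  · push_cast
    ring_nf

theorem thin_spectrum_periodic_general {k : ℕ} (hk : 0 < k) {Y : Set (Fin k → ℝ)}
    {x : ℤ → (Fin k → ℝ)} (hxY : ∀ j, x j ∈ Y) {p : ℕ} (hp : 0 < p) (hper : Function.Periodic x p)
    {ε : ℝ} (hε : 0 < ε) {K : Set ℝ} (hK : IsCompact K)
    (hgap : ∀ E ∈ K, ∃ z : ℤ → (Fin k → ℝ), (∀ j, z j ∈ Y) ∧ (∀ j, dist (x j) (z j) < ε) ∧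
      E ∉ SchrodingerSpectrum (agg k z)) :
    ∃ N₀ : ℕ, ∃ c₀ : ℝ, 0 < c₀ ∧ ∀ N : ℕ, N₀ ≤ N → ∃ y : ℤ → (Fin k → ℝ), (∀ j, y j ∈ Y) ∧
      Function.Periodic y ((N * p : ℕ) : ℤ) ∧ (∀ j, dist (x j) (y j) < ε) ∧
      volume (K ∩ SchrodingerSpectrum (agg k y)) ≤ ENNReal.ofReal (Real.exp (-(c₀ * N))) := by
  let Z := {z : ℤ → (Fin k → ℝ) // ∀ j, z j ∈ Y ∧ dist (x j) (z j) < ε}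
  have hxb : Bornology.IsBounded (range x) := isBounded_range_of_periodic hper (by omega)
  obtain ⟨m, w, c, hc, hw⟩ := exists_fin_spectralGap (W := fun z : Z => agg k z.1)
    (fun z => isBounded_range_agg (isBounded_range_of_dist_lt hxb fun j => (z.2 j).2)) hK
    fun E hE => let ⟨z, hzY, hxz, hzE⟩ := hgap E hE; ⟨⟨z, fun j => ⟨hzY j, hxz j⟩⟩, hzE⟩
  obtain ⟨N₁, c₀, hc₀, hN₁⟩ := exists_mul_pow_div_le_exp (C := 6 * m * p * k) (by positivity)
    (s := √(1 + c / 2)⁻¹) (by positivity)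
    (by rw [Real.sqrt_lt' one_pos, one_pow]; exact inv_lt_one_of_one_lt₀ (by linarith))
    (d := 6 * (m + 1)) (by positivity)
  refine ⟨N₁ + 6 * (m + 1), c₀, hc₀, fun N hN => ?_⟩
  have hfit : m * (4 * (N / (6 * (m + 1))) + 2) ≤ N * p := by
    have ht : 1 ≤ N / (6 * (m + 1)) := (Nat.le_div_iff_mul_le (by positivity)).2 (by omega)
    nlinarith [Nat.div_mul_le_self N (6 * (m + 1)), Nat.le_mul_of_pos_right N hp]
  have hperN : Function.Periodic x ((N * p : ℕ) : ℤ) := by simpa using hper.nat_mul N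
  obtain ⟨y, hyY, hy, hxy, hvol⟩ := exists_periodic_volume_le_of_spectralGap hk hxY hperN hε
    (fun i => (w i).2) hc.le hw hfit
  refine ⟨y, hyY, hy, hxy, hvol.trans (ENNReal.ofReal_le_ofReal ?_)⟩
  convert hN₁ N (by omega) using 2
  push_cast
  ring

/-- Thin spectra for periodic approximants: if `Y ⊆ ℝ^k` is a closed perfect
gap-rich set with exceptional set `S`, then any periodic `x` of minimal period
`p` can be `ε`-approximated by `Np`-periodic `y` with
`Leb(K ∩ σ(H_y)) ≤ e^{-c₀N}` for all large `N`, for compact `K ⊆ ℝ∖S`. -/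
theorem thin_spectrum_periodic (k : ℕ) (hk : 0 < k)
    (Y : Set (Fin k → ℝ)) (hY : Perfect Y) (S : Set ℝ) (hGR : GapRich k Y S)
    (x : ℤ → (Fin k → ℝ)) (hxY : ∀ j, x j ∈ Y)
    (p : ℕ) (hp : 0 < p) (hper : ∀ j : ℤ, x (j + (p : ℤ)) = x j)
    (hmin : ∀ q : ℕ, 0 < q → (∀ j : ℤ, x (j + (q : ℤ)) = x j) → p ≤ q)
    (ε : ℝ) (hε : 0 < ε) (K : Set ℝ) (hKc : IsCompact K) (hKS : K ⊆ Sᶜ) :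
    ∃ N₀ : ℕ, ∃ c₀ : ℝ, 0 < c₀ ∧
      ∀ N : ℕ, N₀ ≤ N →
        ∃ y : ℤ → (Fin k → ℝ),
          (∀ j, y j ∈ Y) ∧
          (∀ j : ℤ, y (j + ((N * p : ℕ) : ℤ)) = y j) ∧
          (∀ j : ℤ, dist (x j) (y j) < ε) ∧
          volume (K ∩ SchrodingerSpectrum (agg k y)) ≤
            ENNReal.ofReal (Real.exp (-(c₀ * N))) :=
  thin_spectrum_periodic_general hk hxY hp hper hε hKc fun _ hE =>
    hGR.exists_dist_lt_notMem_schrodingerSpectrum hxY hp hper hε (hKS hE)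
end
end
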